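/- arXiv:1610.05740 — 3 statements merged into one kernel-verified Lean document; each statement's English description precedes it below -/
import Mathlib

section
/- Let 2 ≤ k ≤ N be integers and let α ∈ ℝ. The power function x ↦ x^α preserves positive semidefiniteness when applied entrywise to N×N positive semidefinite Hankel matrices of rank at most k with entries in (0,∞) if and only if α is a non-negative integer or α ≥ N−2. Moreover, there exists an N×N positive semidefinite Hankel matrix A of rank two with entries in (0,∞) such that the entrywise power A^{∘α} is not positive semidefinite for every non-integral α ∈ (0, N−2). -/
/-- A Hankel matrix: the `(i,j)` entry depends only on `i + j`. -/
def IsHankelMat {n : ℕ} (A : Matrix (Fin n) (Fin n) ℝ) : Prop :=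
  ∀ i j k l : Fin n, (i : ℕ) + (j : ℕ) = (k : ℕ) + (l : ℕ) → A i j = A k l

/-!
Sufficiency holds for all positive semidefinite matrices with positive entries. For integral `α` it
is the Schur product theorem. For `α ≥ N - 2` one follows FitzGerald and Horn: integrate the
entrywise power along the segment from the rank-one matrix which shares one row and column with `A`
up to `A` itself. The derivative involves only the exponent `α - 1` on the remaining `N - 1`
indices.

For necessity, take the matrix with entries `1 + s q ^ (i + j)`. By the binomial series, its
`β`-th power has the quadratic form `∑ r, choose β r * s ^ r * P(q ^ r) ^ 2` at the coefficient
vector of a polynomial `P`. If `n < β < n + 1`, the first negative coefficient is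
`choose β (n + 2)`, and a polynomial of degree `n + 2 < N` can vanish at `1, q, …, q ^ (n + 1)`.
The choice `q = 1 / 3`, `s = 1 / 9` makes the term `r = n + 2` dominate for all `n` and `β`.
-/

section EntrywisePowers

open Matrix

variable {ι : Type*}

lemma posSemidef_of_subsingleton [Subsingleton ι] {A : Matrix ι ι ℝ} (hA : ∀ i, 0 ≤ A i i) :
    A.PosSemidef := by
  classical
  have diagonal_diag : diagonal (fun i => A i i) = A := by
    ext i j
    rw [Subsingleton.elim j i, diagonal_apply_eq]
  exact diagonal_diag ▸ PosSemidef.diagonal hA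

lemma posSemidef_of_submatrix_ne [Finite ι] {A : Matrix ι ι ℝ} (c : ι)
    (row_eq_zero : ∀ j, A c j = 0) (col_eq_zero : ∀ i, A i c = 0)
    (hA : (A.submatrix (fun i : {i // i ≠ c} => (i : ι)) (↑)).PosSemidef) : A.PosSemidef := by
  classical
  cases nonempty_fintype ι
  refine .of_dotProduct_mulVec_nonneg (IsHermitian.ext fun i j => ?_) fun x => ?_
  · by_cases hi : i = c
    · simp [hi, row_eq_zero, col_eq_zero]
    by_cases hj : j = c
    · simp [hj, row_eq_zero, col_eq_zero]
    exact hA.isHermitian.apply ⟨i, hi⟩ ⟨j, hj⟩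
  · convert hA.dotProduct_mulVec_nonneg (fun i => x i) using 1
    simp [dotProduct, mulVec, Fintype.sum_eq_add_sum_subtype_ne _ c, row_eq_zero, col_eq_zero]

lemma posSemidef_sub_of_hasDerivAt [Finite ι] {F F' : ℝ → Matrix ι ι ℝ} {a b : ℝ} (hab : a ≤ b)
    (herm_left : (F a).IsHermitian) (herm_right : (F b).IsHermitian)
    (hF : ∀ t ∈ Set.Icc a b, ∀ i j, HasDerivAt (fun u => F u i j) (F' t i j) t)
    (hF' : ∀ t ∈ Set.Icc a b, (F' t).PosSemidef) : (F b - F a).PosSemidef := by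
  cases nonempty_fintype ι
  refine .of_dotProduct_mulVec_nonneg (herm_right.sub herm_left) fun x => ?_
  have hasDerivAt_form : ∀ t ∈ Set.Icc a b,
      HasDerivAt (fun u => star x ⬝ᵥ (F u *ᵥ x)) (star x ⬝ᵥ (F' t *ᵥ x)) t := fun t ht =>
    .fun_sum fun i _ => .const_mul _ <| .fun_sum fun j _ => (hF t ht i j).mul_const _
  have form_mono : MonotoneOn (fun u => star x ⬝ᵥ (F u *ᵥ x)) (Set.Icc a b) :=
    monotoneOn_of_hasDerivWithinAt_nonneg (convex_Icc a b)
      (fun t ht => (hasDerivAt_form t ht).continuousAt.continuousWithinAt)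
      (fun t ht => (hasDerivAt_form t (interior_subset ht)).hasDerivWithinAt)
      (fun t ht => (hF' t (interior_subset ht)).dotProduct_mulVec_nonneg x)
  rw [sub_mulVec, dotProduct_sub, sub_nonneg]
  exact form_mono (Set.left_mem_Icc.2 hab) (Set.right_mem_Icc.2 hab) hab

/-- The rank-one matrix `(A i c * A c j / A c c)` which agrees with `A` on the row and the column
of the pivot `c`; subtracting it from `A` is one step of symmetric Gaussian elimination. It is `0`
when the pivot entry is `0`. -/
noncomputable def crossPart (A : Matrix ι ι ℝ) (c : ι) : Matrix ι ι ℝ :=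
  (A c c)⁻¹ • vecMulVec (A · c) (A c)

lemma crossPart_apply (A : Matrix ι ι ℝ) (c i j : ι) :
    crossPart A c i j = (A c c)⁻¹ * (A i c * A c j) := rfl

lemma crossPart_apply_pivot_left {A : Matrix ι ι ℝ} {c : ι} (hc : A c c ≠ 0) (j : ι) :
    crossPart A c c j = A c j := by
  rw [crossPart_apply, inv_mul_cancel_left₀ hc]

lemma crossPart_apply_pivot_right {A : Matrix ι ι ℝ} {c : ι} (hc : A c c ≠ 0) (i : ι) :
    crossPart A c i c = A i c := by
  rw [crossPart_apply, mul_comm (A i c), inv_mul_cancel_left₀ hc]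

lemma posSemidef_crossPart [Finite ι] {A : Matrix ι ι ℝ} (hA : A.IsHermitian) {c : ι}
    (hc : 0 ≤ A c c) : (crossPart A c).PosSemidef := by
  have col_eq_row : (A · c) = star (A c) := funext fun i => (hA.apply i c).symm
  rw [crossPart, col_eq_row]
  exact (posSemidef_vecMulVec_star_self (A c)).smul (inv_nonneg.2 hc)

lemma map_rpow_crossPart {A : Matrix ι ι ℝ} (hA : ∀ i j, 0 ≤ A i j) (c : ι) (α : ℝ) :
    (crossPart A c).map (fun x => x ^ α) = crossPart (A.map fun x => x ^ α) c := by
  ext i j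
  simp only [map_apply, crossPart_apply]
  rw [Real.mul_rpow (inv_nonneg.2 (hA c c)) (mul_nonneg (hA i c) (hA c j)),
    Real.mul_rpow (hA i c) (hA c j), Real.inv_rpow (hA c c)]

-- The residual is `Pᴴ A P`, where `P = 1 - (A c c)⁻¹ e_c (A c)` eliminates the column `c`.
lemma posSemidef_sub_crossPart [Finite ι] {A : Matrix ι ι ℝ} (hA : A.PosSemidef) {c : ι}
    (hc : A c c ≠ 0) : (A - crossPart A c).PosSemidef := by
  classical
  cases nonempty_fintype ι
  set P : Matrix ι ι ℝ := 1 - (A c c)⁻¹ • vecMulVec (Pi.single c 1) (A c) with hP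
  have mul_P : A * P = A - crossPart A c := by
    rw [hP, mul_sub, mul_one, Matrix.mul_smul, mul_vecMulVec, mulVec_single_one]
    rfl
  have pivot_row : Pi.single c 1 ᵥ* (A - crossPart A c) = 0 := by
    ext j
    simp [crossPart_apply_pivot_left hc]
  have conjTranspose_P : Pᴴ = 1 - (A c c)⁻¹ • vecMulVec (A c) (Pi.single c 1) := by
    simp [hP]
  have residual_eq : A - crossPart A c = Pᴴ * A * P := by
    rw [mul_assoc, mul_P, conjTranspose_P, sub_mul, one_mul, Matrix.smul_mul, vecMulVec_mul,
      pivot_row, vecMulVec_zero, smul_zero, sub_zero]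
  exact residual_eq ▸ hA.conjTranspose_mul_mul_same P

lemma hasDerivAt_add_mul_rpow {a b α t : ℝ} (ht : 0 < a + t * b) :
    HasDerivAt (fun u => (a + u * b) ^ α) (α * (b * (a + t * b) ^ (α - 1))) t := by
  convert ((hasDerivAt_mul_const b).const_add a).rpow_const (p := α) (Or.inl ht.ne') using 1
  ring

lemma crossPart_add_smul_sub_pos {A : Matrix ι ι ℝ} (hA : ∀ i j, 0 < A i j) (c : ι) {t : ℝ}
    (ht : t ∈ Set.Icc (0 : ℝ) 1) (i j : ι) :
    0 < (crossPart A c + t • (A - crossPart A c)) i j := by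
  have cross_pos : 0 < crossPart A c i j :=
    mul_pos (inv_pos.2 (hA c c)) (mul_pos (hA i c) (hA c j))
  exact (convex_Ioi (0 : ℝ)).add_smul_sub_mem cross_pos (hA i j) ht

-- Integrate along the segment from `crossPart A c` to `A`. The derivative of the entrywise power is
-- `α` times the Hadamard product of `A - crossPart A c`, which vanishes on row and column `c`, with
-- an entrywise power of exponent `α - 1`, so only the indices other than `c` matter.
lemma posSemidef_map_rpow_of_forall_submatrix_ne [Finite ι] {A : Matrix ι ι ℝ}
    (hA : A.PosSemidef) (hpos : ∀ i j, 0 < A i j) {α : ℝ} (hα : 0 ≤ α) (c : ι)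
    (hsub : ∀ M : Matrix {i // i ≠ c} {i // i ≠ c} ℝ, M.PosSemidef → (∀ i j, 0 < M i j) →
      (M.map fun x => x ^ (α - 1)).PosSemidef) :
    (A.map fun x => x ^ α).PosSemidef := by
  set B := crossPart A c with hB
  set C := A - B with hC
  have B_psd : B.PosSemidef := posSemidef_crossPart hA.isHermitian (hpos c c).le
  have C_psd : C.PosSemidef := posSemidef_sub_crossPart hA (hpos c c).ne'
  have herm : ∀ {M : Matrix ι ι ℝ}, M.PosSemidef → (M.map fun x => x ^ α).IsHermitian :=
    fun hM => hM.isHermitian.map _ fun _ => rfl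
  have segment_pos : ∀ t ∈ Set.Icc (0 : ℝ) 1, ∀ i j, 0 < (B + t • C) i j :=
    fun _ => crossPart_add_smul_sub_pos hpos c
  have derivative_psd : ∀ t ∈ Set.Icc (0 : ℝ) 1,
      (α • (C ⊙ (B + t • C).map fun x => x ^ (α - 1))).PosSemidef := by
    refine fun t ht => (posSemidef_of_submatrix_ne c (fun j => ?_) (fun i => ?_) ?_).smul hα
    · simp [hC, hB, crossPart_apply_pivot_left (hpos c c).ne']
    · simp [hC, hB, crossPart_apply_pivot_right (hpos c c).ne']
    · exact (C_psd.submatrix _).hadamard <|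
        hsub _ ((B_psd.add (C_psd.smul ht.1)).submatrix _) fun i j => segment_pos t ht i j
  have increment_psd : ((B + (1 : ℝ) • C).map (fun x => x ^ α)
      - (B + (0 : ℝ) • C).map fun x => x ^ α).PosSemidef :=
    posSemidef_sub_of_hasDerivAt (F := fun t => (B + t • C).map fun x => x ^ α) zero_le_one
      (herm (B_psd.add (C_psd.smul le_rfl))) (herm (B_psd.add (C_psd.smul zero_le_one)))
      (fun t ht i j => hasDerivAt_add_mul_rpow (segment_pos t ht i j)) derivative_psd
  have start_psd : (B.map fun x => x ^ α).PosSemidef := by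
    rw [map_rpow_crossPart (fun i j => (hpos i j).le)]
    exact posSemidef_crossPart (herm hA) (Real.rpow_nonneg (hpos c c).le α)
  simpa [hC] using increment_psd.add start_psd

theorem posSemidef_map_rpow_of_card_sub_two_le {ι : Type*} [Fintype ι] {A : Matrix ι ι ℝ}
    (hA : A.PosSemidef) (hpos : ∀ i j, 0 < A i j) {α : ℝ} (hα : (Fintype.card ι : ℝ) - 2 ≤ α) :
    (A.map fun x => x ^ α).PosSemidef := by
  classical
  obtain _ | _ := subsingleton_or_nontrivial ι
  · exact posSemidef_of_subsingleton fun i => Real.rpow_nonneg (hpos i i).le α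
  have two_le_card : (2 : ℝ) ≤ Fintype.card ι := by exact_mod_cast Fintype.one_lt_card
  obtain ⟨c⟩ := (inferInstance : Nonempty ι)
  have card_ne : (Fintype.card {i // i ≠ c} : ℝ) = Fintype.card ι - 1 := by
    rw [Fintype.card_subtype_compl, Fintype.card_subtype_eq, Nat.cast_pred Fintype.card_pos]
  exact posSemidef_map_rpow_of_forall_submatrix_ne hA hpos (by linarith) c fun M hM hMpos =>
    posSemidef_map_rpow_of_card_sub_two_le hM hMpos (by linarith)
termination_by Fintype.card ι
decreasing_by
  classical
  exact Fintype.card_subtype_lt (x := c) (not_not.2 rfl)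

open scoped ComplexOrder in
theorem posSemidef_map_pow {ι 𝕜 : Type*} [Finite ι] [RCLike 𝕜] {A : Matrix ι ι 𝕜}
    (hA : A.PosSemidef) (n : ℕ) : (A.map fun x => x ^ n).PosSemidef := by
  induction n with
  | zero =>
    have map_pow_zero : A.map (fun x => x ^ 0) = vecMulVec 1 (star 1) := by
      ext
      simp [vecMulVec_apply]
    exact map_pow_zero ▸ posSemidef_vecMulVec_self_star 1
  | succ n ih =>
    have map_pow_succ : A.map (fun x => x ^ (n + 1)) = A.map (fun x => x ^ n) ⊙ A := by
      ext
      simp [pow_succ]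
    exact map_pow_succ ▸ ih.hadamard hA

lemma not_posSemidef_map_rpow_of_neg {A : Matrix ι ι ℝ} (hpos : ∀ i j, 0 < A i j) {i j : ι}
    (hdet : A i j * A j i < A i i * A j j) {α : ℝ} (hα : α < 0) :
    ¬(A.map fun x => x ^ α).PosSemidef := by
  intro hpsd
  have minor_nonneg := (hpsd.submatrix ![i, j]).det_nonneg
  simp only [det_fin_two, submatrix_apply, map_apply, cons_val_zero, cons_val_one,
    ← Real.mul_rpow (hpos _ _).le (hpos _ _).le] at minor_nonneg
  linarith [Real.rpow_lt_rpow_of_neg (mul_pos (hpos i j) (hpos j i)) hdet hα]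

end EntrywisePowers

section BinomialCoefficients

lemma ringChoose_succ_right (β : ℝ) (r : ℕ) :
    Ring.choose β (r + 1) = Ring.choose β r * ((β - r) / (r + 1)) := by
  have h := Ring.choose_smul_choose β r.le_succ
  rw [Nat.choose_succ_self_right, Nat.succ_eq_add_one, Nat.add_sub_cancel_left,
    Ring.choose_one_right, nsmul_eq_mul, Nat.cast_succ] at h
  rw [mul_div_assoc', eq_div_iff (by positivity), ← h, mul_comm]

variable {β : ℝ} {n : ℕ}

lemma ringChoose_pos_of_lt (hn : n < β) {r : ℕ} (hr : r ≤ n + 1) : 0 < Ring.choose β r := by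
  induction r with
  | zero => simp
  | succ r ih =>
    have r_le : (r : ℝ) ≤ n := by exact_mod_cast Nat.le_of_succ_le_succ hr
    rw [ringChoose_succ_right]
    exact mul_pos (ih (by lia)) (div_pos (by linarith) (by positivity))

lemma ringChoose_add_two_neg (hn : n < β) (hn' : β < n + 1) : Ring.choose β (n + 2) < 0 := by
  rw [ringChoose_succ_right]
  refine mul_neg_of_pos_of_neg (ringChoose_pos_of_lt hn le_rfl) (div_neg_of_neg_of_pos ?_ ?_)
  · push_cast
    linarith
  · positivity

lemma abs_ringChoose_add_le (hβ : -1 ≤ β) (hn : β ≤ 2 * n + 1) (k : ℕ) :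
    |Ring.choose β (k + n)| ≤ |Ring.choose β n| := by
  induction k with
  | zero => rw [zero_add]
  | succ k ih =>
    have ratio_le_one : |(β - (k + n : ℕ)) / ((k + n : ℕ) + 1)| ≤ 1 := by
      rw [abs_le, le_div_iff₀ (by positivity), div_le_iff₀ (by positivity)]
      push_cast
      constructor <;> linarith [k.cast_nonneg (α := ℝ)]
    rw [Nat.add_right_comm, ringChoose_succ_right, abs_mul]
    exact (mul_le_of_le_one_right (abs_nonneg _) ratio_le_one).trans ih

lemma hasSum_ringChoose_mul_pow (β : ℝ) {x : ℝ} (hx : |x| < 1) :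
    HasSum (fun r => Ring.choose β r * x ^ r) ((1 + x) ^ β) := by
  have mem_ball : x ∈ Metric.eball (0 : ℝ) 1 := by
    simpa [edist_dist, dist_eq_norm] using hx
  have h := Real.one_add_rpow_hasFPowerSeriesOnBall_zero (a := β) |>.hasSum mem_ball
  simpa only [binomialSeries_apply, List.ofFn_const, List.prod_replicate, smul_eq_mul, zero_add]
    using h

end BinomialCoefficients

section GeometricNodes

open Finset Polynomial

lemma one_sub_sum_le_prod_one_sub {ι : Type*} {s : Finset ι} {f : ι → ℝ}
    (h0 : ∀ i ∈ s, 0 ≤ f i) (h1 : ∀ i ∈ s, f i ≤ 1) : 1 - ∑ i ∈ s, f i ≤ ∏ i ∈ s, (1 - f i) := by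
  classical
  induction s using Finset.induction_on with
  | empty => simp
  | insert a s ha ih =>
    simp only [forall_mem_insert] at h0 h1
    rw [sum_insert ha, prod_insert ha]
    nlinarith [ih h0.2 h1.2, mul_nonneg h0.1 (sum_nonneg h0.2), h1.1]

/-- For `q ≠ 0`, the polynomial of degree `m` with value `1` at `0` and roots
`1, q, …, q ^ (m - 1)`. -/
noncomputable def geomNodePoly (q : ℝ) (m : ℕ) : ℝ[X] :=
  ∏ j ∈ range m, (1 - C (q ^ j)⁻¹ * X)

variable {q : ℝ} {m : ℕ}

lemma natDegree_geomNodePoly_le (q : ℝ) (m : ℕ) : (geomNodePoly q m).natDegree ≤ m := by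
  refine (natDegree_prod_le _ _).trans ?_
  refine (sum_le_card_nsmul _ _ 1 fun j _ => ?_).trans_eq (by simp)
  change (1 - C (q ^ j)⁻¹ * X).natDegree ≤ 1
  compute_degree

lemma eval_geomNodePoly_eq_zero (hq : q ≠ 0) {r : ℕ} (hr : r < m) :
    (geomNodePoly q m).eval (q ^ r) = 0 := by
  rw [geomNodePoly, eval_prod]
  exact prod_eq_zero (mem_range.2 hr) (by simp [hq])

lemma eval_geomNodePoly (hq : q ≠ 0) {r : ℕ} (hr : m ≤ r) :
    (geomNodePoly q m).eval (q ^ r) = ∏ j ∈ range m, (1 - q ^ (r - j)) := by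
  rw [geomNodePoly, eval_prod]
  refine prod_congr rfl fun j hj => ?_
  rw [pow_sub₀ q hq ((mem_range.1 hj).le.trans hr)]
  simp only [eval_sub, eval_one, eval_mul, eval_C, eval_X, mul_comm]

lemma sq_eval_geomNodePoly_le_one (hq0 : 0 < q) (hq1 : q ≤ 1) {r : ℕ} (hr : m ≤ r) :
    (geomNodePoly q m).eval (q ^ r) ^ 2 ≤ 1 := by
  have factor_mem : ∀ k, 0 ≤ 1 - q ^ k ∧ 1 - q ^ k ≤ 1 := fun k =>
    ⟨sub_nonneg.2 (pow_le_one₀ hq0.le hq1), sub_le_self 1 (pow_pos hq0 k).le⟩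
  rw [eval_geomNodePoly hq0.ne' hr]
  exact pow_le_one₀ (prod_nonneg fun j _ => (factor_mem _).1)
    (prod_le_one (fun j _ => (factor_mem _).1) fun j _ => (factor_mem _).2)

lemma one_sub_div_le_eval_geomNodePoly (hq0 : 0 < q) (hq1 : q < 1) :
    1 - q / (1 - q) ≤ (geomNodePoly q m).eval (q ^ m) := by
  have sum_le : ∑ j ∈ range m, q ^ (m - j) ≤ q / (1 - q) := by
    calc ∑ j ∈ range m, q ^ (m - j) = ∑ j ∈ range m, q ^ (m - 1 - j + 1) :=
          sum_congr rfl fun j hj => by rw [show m - j = m - 1 - j + 1 by grind]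
      _ = (∑ j ∈ range m, q ^ j) * q := by
          rw [sum_range_reflect (fun j => q ^ (j + 1)), sum_mul]
          rfl
      _ ≤ (1 - q)⁻¹ * q := by
          gcongr
          exact sum_le_hasSum _ (fun j _ => (pow_pos hq0 j).le)
            (hasSum_geometric_of_lt_one hq0.le hq1)
      _ = q / (1 - q) := inv_mul_eq_div _ _
  rw [eval_geomNodePoly hq0.ne' le_rfl]
  exact (sub_le_sub_left sum_le 1).trans <| one_sub_sum_le_prod_one_sub
    (fun j _ => (pow_pos hq0 _).le) fun j _ => pow_le_one₀ hq0.le hq1.le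

end GeometricNodes

section TwoAtoms

open Finset Matrix Polynomial

/-- The `N × N` truncated moment matrix of the measure `δ_1 + s δ_q`, the test matrix of the
necessity part; rows and columns are indexed from `0`. -/
noncomputable def twoAtomMomentMatrix (N : ℕ) (s q : ℝ) : Matrix (Fin N) (Fin N) ℝ :=
  of fun i j => 1 + s * q ^ ((i : ℕ) + j)

variable {N : ℕ} {s q β : ℝ}

lemma twoAtomMomentMatrix_apply (i j : Fin N) :
    twoAtomMomentMatrix N s q i j = 1 + s * q ^ ((i : ℕ) + j) := rfl

lemma isHankelMat_twoAtomMomentMatrix (N : ℕ) (s q : ℝ) :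
    IsHankelMat (twoAtomMomentMatrix N s q) := fun i j k l h => by
  simp only [twoAtomMomentMatrix_apply, h]

lemma twoAtomMomentMatrix_pos (hs : 0 ≤ s) (hq : 0 ≤ q) (i j : Fin N) :
    0 < twoAtomMomentMatrix N s q i j := by
  rw [twoAtomMomentMatrix_apply]
  positivity

lemma twoAtomMomentMatrix_eq_mul (N : ℕ) (s q : ℝ) :
    twoAtomMomentMatrix N s q = (of fun (i : Fin N) k => ![1, q] k ^ (i : ℕ)) *
      diagonal ![1, s] * (of fun (i : Fin N) k => ![1, q] k ^ (i : ℕ))ᴴ := by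
  ext i j
  rw [twoAtomMomentMatrix_apply, mul_apply, Fin.sum_univ_two]
  simp only [mul_diagonal, of_apply, conjTranspose_apply, star_trivial, cons_val_zero,
    cons_val_one, one_pow]
  ring

lemma posSemidef_twoAtomMomentMatrix (N : ℕ) (hs : 0 ≤ s) (q : ℝ) :
    (twoAtomMomentMatrix N s q).PosSemidef := by
  rw [twoAtomMomentMatrix_eq_mul]
  refine (PosSemidef.diagonal fun k => ?_).mul_mul_conjTranspose_same _
  fin_cases k
  exacts [zero_le_one, hs]

lemma rank_twoAtomMomentMatrix (hN : 2 ≤ N) (hs : s ≠ 0) (hq : q ≠ 1) :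
    (twoAtomMomentMatrix N s q).rank = 2 := by
  refine le_antisymm ?_ ?_
  · rw [twoAtomMomentMatrix_eq_mul, Matrix.mul_assoc]
    exact (rank_mul_le_left _ _).trans (rank_le_width _)
  · have corner_det : ((twoAtomMomentMatrix N s q).submatrix (Fin.castLE hN) (Fin.castLE hN)).det
        = s * (q - 1) ^ 2 := by
      simp only [det_fin_two, submatrix_apply, twoAtomMomentMatrix_apply, Fin.val_castLE,
        Fin.val_zero, Fin.val_one]
      ring
    have corner_rank := rank_of_det_ne_zero
      (corner_det.trans_ne (mul_ne_zero hs (pow_ne_zero 2 (sub_ne_zero.2 hq))))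
    rw [Fintype.card_fin] at corner_rank
    exact corner_rank.symm.trans_le (rank_submatrix_le _ _ _)

-- The binomial series writes the power as `∑ r, choose β r * s ^ r * q ^ (r * i) * q ^ (r * j)`.
lemma hasSum_dotProduct_twoAtomMomentMatrix_map_rpow (hs : |s| < 1) (hq : |q| ≤ 1)
    {P : ℝ[X]} (hP : P.natDegree < N) :
    HasSum (fun r => Ring.choose β r * s ^ r * P.eval (q ^ r) ^ 2)
      ((fun i : Fin N => P.coeff i) ⬝ᵥ
        ((twoAtomMomentMatrix N s q).map (fun x => x ^ β) *ᵥ fun i : Fin N => P.coeff i)) := by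
  have eval_eq : ∀ y : ℝ, P.eval y = ∑ i : Fin N, P.coeff i * y ^ (i : ℕ) := fun y => by
    rw [eval_eq_sum_range' hP, Finset.sum_range]
  have entry_hasSum : ∀ i j : Fin N, HasSum
      (fun r => Ring.choose β r * (s * q ^ ((i : ℕ) + j)) ^ r)
      ((twoAtomMomentMatrix N s q).map (fun x => x ^ β) i j) := fun i j => by
    refine hasSum_ringChoose_mul_pow β ?_
    rw [abs_mul, abs_pow]
    exact (mul_le_of_le_one_right (abs_nonneg s) (pow_le_one₀ (abs_nonneg q) hq)).trans_lt hs
  have form_hasSum := hasSum_sum fun i (_ : i ∈ univ) => (hasSum_sum fun j (_ : j ∈ univ) =>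
    (entry_hasSum i j).mul_right (P.coeff j)).mul_left (P.coeff i)
  refine form_hasSum.congr_fun fun r => ?_
  rw [eval_eq, sq, sum_mul_sum, mul_sum]
  refine sum_congr rfl fun i _ => ?_
  simp only [mul_sum]
  refine sum_congr rfl fun j _ => ?_
  ring

lemma ringChoose_mul_pow_mul_sq_eval_geomNodePoly_le {m : ℕ} (hβ : -1 ≤ β) (hm : β ≤ 2 * m + 1)
    (hs : 0 ≤ s) (hq0 : 0 < q) (hq1 : q ≤ 1) (k : ℕ) :
    Ring.choose β (k + m) * s ^ (k + m) * (geomNodePoly q m).eval (q ^ (k + m)) ^ 2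
      ≤ |Ring.choose β m| * s ^ m * s ^ k := by
  calc Ring.choose β (k + m) * s ^ (k + m) * (geomNodePoly q m).eval (q ^ (k + m)) ^ 2
      ≤ |Ring.choose β m| * s ^ (k + m) * 1 := by
        gcongr
        · exact (le_abs_self _).trans (abs_ringChoose_add_le hβ hm k)
        · exact sq_eval_geomNodePoly_le_one hq0 hq1 (Nat.le_add_left m k)
    _ = |Ring.choose β m| * s ^ m * s ^ k := by ring

lemma hasSum_le_add_mul_div_one_sub {f : ℕ → ℝ} {a C : ℝ} {m : ℕ} (hf : HasSum f a)
    (hs0 : 0 ≤ s) (hs1 : s < 1) (hinit : ∀ r < m, f r = 0)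
    (htail : ∀ k, f (k + m) ≤ C * s ^ k) : a ≤ f m + C * (s / (1 - s)) := by
  have tail_hasSum := (hasSum_nat_add_iff' (m + 1)).2 hf
  have geom_hasSum := (hasSum_geometric_of_lt_one hs0 hs1).mul_left (C * s)
  have tail_le := hasSum_le (fun k => ?_) tail_hasSum geom_hasSum
  · rw [sum_range_succ, sum_eq_zero fun r hr => hinit r (mem_range.1 hr), zero_add] at tail_le
    rw [mul_div_assoc', div_eq_mul_inv]
    linarith
  · rw [mul_assoc, ← pow_succ', ← add_assoc, Nat.add_right_comm]
    exact htail (k + 1)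

-- Testing against the coefficients of `geomNodePoly q (n + 2)` kills the terms `r < n + 2` of the
-- binomial expansion; the term `r = n + 2` is negative and, by `hsq`, outweighs the rest.
lemma not_posSemidef_twoAtomMomentMatrix_map_rpow_of_mem_Ioo {n : ℕ}
    (hβ : β ∈ Set.Ioo (n : ℝ) (n + 1)) (hN : n + 2 < N) (hq0 : 0 < q) (hq : q ≤ 1 / 2)
    (hs0 : 0 < s) (hs1 : s < 1) (hsq : s / (1 - s) < (1 - q / (1 - q)) ^ 2) :
    ¬((twoAtomMomentMatrix N s q).map fun x => x ^ β).PosSemidef := by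
  intro hpsd
  have hq1 : q < 1 := by linarith
  set P := geomNodePoly q (n + 2)
  have choose_neg := ringChoose_add_two_neg hβ.1 hβ.2
  have form_hasSum := hasSum_dotProduct_twoAtomMomentMatrix_map_rpow (β := β)
    (abs_lt.2 ⟨by linarith, hs1⟩) (abs_le.2 ⟨by linarith, hq1.le⟩)
    ((natDegree_geomNodePoly_le q (n + 2)).trans_lt hN)
  have init_eq_zero : ∀ r < n + 2, Ring.choose β r * s ^ r * P.eval (q ^ r) ^ 2 = 0 :=
    fun r hr => by rw [eval_geomNodePoly_eq_zero hq0.ne' hr, zero_pow two_ne_zero, mul_zero]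
  have form_le := hasSum_le_add_mul_div_one_sub form_hasSum hs0.le hs1 init_eq_zero <|
    ringChoose_mul_pow_mul_sq_eval_geomNodePoly_le (by linarith [hβ.1, n.cast_nonneg (α := ℝ)])
      (by push_cast; linarith [hβ.2, n.cast_nonneg (α := ℝ)]) hs0.le hq0 hq1.le
  have rest_lt : s / (1 - s) < P.eval (q ^ (n + 2)) ^ 2 := by
    refine hsq.trans_le (pow_le_pow_left₀ ?_ (one_sub_div_le_eval_geomNodePoly hq0 hq1) 2)
    rw [sub_nonneg, div_le_one] <;> linarith
  have form_neg : Ring.choose β (n + 2) * s ^ (n + 2) * P.eval (q ^ (n + 2)) ^ 2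
      + |Ring.choose β (n + 2)| * s ^ (n + 2) * (s / (1 - s)) < 0 := by
    calc _ = |Ring.choose β (n + 2)| * s ^ (n + 2) * (s / (1 - s) - P.eval (q ^ (n + 2)) ^ 2) := by
          rw [abs_of_neg choose_neg]
          ring
      _ < 0 := mul_neg_of_pos_of_neg (mul_pos (abs_pos.2 choose_neg.ne) (pow_pos hs0 _))
          (sub_neg.2 rest_lt)
  exact (form_le.trans_lt form_neg).not_ge (hpsd.dotProduct_mulVec_nonneg _)

lemma not_posSemidef_twoAtomMomentMatrix_map_rpow_of_neg (hN : 2 ≤ N) (hs : 0 < s) (hq0 : 0 ≤ q)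
    (hq1 : q ≠ 1) (hβ : β < 0) :
    ¬((twoAtomMomentMatrix N s q).map fun x => x ^ β).PosSemidef := by
  refine not_posSemidef_map_rpow_of_neg (twoAtomMomentMatrix_pos hs.le hq0)
    (i := Fin.castLE hN 0) (j := Fin.castLE hN 1) ?_ hβ
  have minor_pos : 0 < s * (q - 1) ^ 2 := mul_pos hs (sq_pos_of_ne_zero (sub_ne_zero.2 hq1))
  simp only [twoAtomMomentMatrix_apply, Fin.val_castLE, Fin.val_zero, Fin.val_one]
  linear_combination minor_pos

theorem not_posSemidef_twoAtomMomentMatrix_map_rpow (hN : 2 ≤ N) (hβ : ¬∃ n : ℕ, β = n)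
    (hβN : β < N - 2) (hq0 : 0 < q) (hq : q ≤ 1 / 2) (hs0 : 0 < s) (hs1 : s < 1)
    (hsq : s / (1 - s) < (1 - q / (1 - q)) ^ 2) :
    ¬((twoAtomMomentMatrix N s q).map fun x => x ^ β).PosSemidef := by
  obtain β_neg | β_nonneg := lt_or_ge β 0
  · exact not_posSemidef_twoAtomMomentMatrix_map_rpow_of_neg hN hs0 hq0.le (by linarith) β_neg
  have floor_lt : (⌊β⌋₊ : ℝ) < β :=
    (Nat.floor_le β_nonneg).lt_of_ne fun h => hβ ⟨_, h.symm⟩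
  have floor_add_two_lt : ⌊β⌋₊ + 2 < N := by
    rw [← Nat.cast_lt (α := ℝ)]
    push_cast
    linarith
  exact not_posSemidef_twoAtomMomentMatrix_map_rpow_of_mem_Ioo
    ⟨floor_lt, Nat.lt_floor_add_one β⟩ floor_add_two_lt hq0 hq hs0 hs1 hsq

end TwoAtoms

/-- The power function `x ↦ x^α` preserves positive semidefiniteness entrywise on
rank-at-most-`k` positive semidefinite `N × N` Hankel matrices with positive entries iff
`α` is a non-negative integer or `α ≥ N - 2`; moreover there is a single rank-two
positive semidefinite Hankel matrix witnessing failure for all non-integral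
`α ∈ (0, N-2)`. -/
theorem hankel_power_preserver (N k : ℕ) (hk : 2 ≤ k) (hkN : k ≤ N) (α : ℝ) :
    ((∀ A : Matrix (Fin N) (Fin N) ℝ, IsHankelMat A → A.PosSemidef → A.rank ≤ k →
        (∀ i j, 0 < A i j) → (A.map fun x => x ^ α).PosSemidef) ↔
      ((∃ n : ℕ, α = n) ∨ (N : ℝ) - 2 ≤ α)) ∧
    ∃ A : Matrix (Fin N) (Fin N) ℝ, IsHankelMat A ∧ A.PosSemidef ∧ A.rank = 2 ∧
      (∀ i j, 0 < A i j) ∧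
      ∀ β : ℝ, (¬∃ n : ℕ, β = n) → β ∈ Set.Ioo (0 : ℝ) ((N : ℝ) - 2) →
        ¬(A.map fun x => x ^ β).PosSemidef := by
  have hN : 2 ≤ N := hk.trans hkN
  set A := twoAtomMomentMatrix N (1 / 9) (1 / 3)
  have A_hankel : IsHankelMat A := isHankelMat_twoAtomMomentMatrix N _ _
  have A_psd : A.PosSemidef := posSemidef_twoAtomMomentMatrix N (by norm_num) _
  have A_rank : A.rank = 2 := rank_twoAtomMomentMatrix hN (by norm_num) (by norm_num)
  have A_pos : ∀ i j, 0 < A i j := twoAtomMomentMatrix_pos (by norm_num) (by norm_num)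
  have A_not_psd : ∀ β : ℝ, (¬∃ n : ℕ, β = n) → β < N - 2 →
      ¬(A.map fun x => x ^ β).PosSemidef := fun β hβ hβN =>
    not_posSemidef_twoAtomMomentMatrix_map_rpow hN hβ hβN
      (by norm_num) (by norm_num) (by norm_num) (by norm_num) (by norm_num)
  refine ⟨⟨fun preserves => ?_, ?_⟩,
    A, A_hankel, A_psd, A_rank, A_pos, fun β hβ hβN => A_not_psd β hβ hβN.2⟩
  · by_contra h
    rw [not_or, not_le] at h
    exact A_not_psd α h.1 h.2 (preserves A A_hankel A_psd (A_rank.trans_le hk) A_pos)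
  · rintro (⟨n, rfl⟩ | hα) B - hB - hB_pos
    · simpa only [Real.rpow_natCast] using posSemidef_map_pow hB n
    · exact posSemidef_map_rpow_of_card_sub_two_le hB hB_pos (by rwa [Fintype.card_fin])
end

section
/- For a function F : [0,∞) → ℝ, the following are equivalent: (1) for every totally non-negative rectangular real matrix of any size, applying F entrywise yields a totally non-negative matrix; (2) for every totally non-negative real symmetric matrix of any size, applying F entrywise yields a totally non-negative matrix; (3) F is constant or linear: there exists c ≥ 0 such that either F(x) = c for all x ≥ 0, or F(x) = c·x for all x ≥ 0. -/
/-- A totally non-negative matrix: every minor is non-negative. -/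
def TotallyNonneg {m n : ℕ} (A : Matrix (Fin m) (Fin n) ℝ) : Prop :=
  ∀ (k : ℕ) (r : Fin k → Fin m) (c : Fin k → Fin n),
    StrictMono r → StrictMono c → 0 ≤ (A.submatrix r c).det

/-!
Necessity: minors of rank-one matrices force `F (x * y) * F 1 = F x * F y`. If `F 0 ≠ 0` or
`F 1 = 0`, then `F` is constant. Otherwise, after normalising `F 1 = 1`, the determinant of
`!![x, x, 0; x, x + y, y; 0, y, y]` shows that `F` is superadditive on the positive reals, so `F`
is increasing and multiplicative, i.e. `F x = x ^ p`, with `p ≥ 1` because `2 ≤ F 2`.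

To exclude `p > 1`, iterate: `x ↦ x ^ (p ^ k)` is then a preserver for every `k`. Applied to a
matrix with entries `1 + m i j / p ^ k` and letting `k → ∞`, it shows that `exp (m i j)` is totally
non-negative whenever all the matrices `1 + x * m i j`, `x ≥ 0`, are. An explicit `5 × 5` matrix
violates this. The totally non-negative test matrices are of the form `V * D * Vᵀ` with `V` totally
non-negative and `D` diagonal, which suffices by the Cauchy–Binet formula.
-/

open Filter Topology Matrix

section CauchyBinet

variable {R ι κ : Type*} [CommRing R] [Fintype ι] [Fintype κ] [DecidableEq κ]

lemma det_mul_eq_sum_prod_mul_det_submatrix (A : Matrix κ ι R) (B : Matrix ι κ R) :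
    (A * B).det = ∑ f : κ → ι, (∏ i, B (f i) i) * (A.submatrix id f).det := by
  simp only [det_apply', mul_apply, Finset.prod_univ_sum, Finset.mul_sum,
    Fintype.piFinset_univ, submatrix_apply, id_eq, Finset.prod_mul_distrib]
  rw [Finset.sum_comm]
  exact Finset.sum_congr rfl fun f _ ↦ Finset.sum_congr rfl fun σ _ ↦ by ring

-- Summing over all maps `κ → ι` counts each `|κ|`-subset of `ι` once per ordering, hence `|κ|!`.
lemma factorial_card_smul_det_mul (A : Matrix κ ι R) (B : Matrix ι κ R) :
    (Fintype.card κ).factorial • (A * B).det =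
      ∑ f : κ → ι, (A.submatrix id f).det * (B.submatrix f id).det := by
  have sum_eq_det_mul (σ : Equiv.Perm κ) : ∑ f : κ → ι, (A.submatrix id f).det *
      (Equiv.Perm.sign σ * ∏ i, B (f (σ i)) i) = (A * B).det := by
    rw [det_mul_eq_sum_prod_mul_det_submatrix]
    refine Fintype.sum_equiv (σ.symm.arrowCongr (Equiv.refl ι)) _ _ fun f ↦ ?_
    have sign_mul_det : (A.submatrix id (f ∘ σ)).det =
        Equiv.Perm.sign σ * (A.submatrix id f).det := det_permute' σ (A.submatrix id f)
    change _ = (∏ i, B (f (σ i)) i) * (A.submatrix id (f ∘ σ)).det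
    rw [sign_mul_det]
    ring
  simp only [det_apply' (B.submatrix _ id), submatrix_apply, id_eq, Finset.mul_sum]
  rw [Finset.sum_comm]
  simp [sum_eq_det_mul, Fintype.card_perm]

end CauchyBinet

namespace TotallyNonneg

variable {l m n : ℕ} {A : Matrix (Fin m) (Fin n) ℝ}

lemma apply_nonneg (hA : TotallyNonneg A) (i : Fin m) (j : Fin n) : 0 ≤ A i j := by
  simpa using hA 1 (fun _ ↦ i) (fun _ ↦ j) (Subsingleton.strictMono _) (Subsingleton.strictMono _)

lemma transpose (hA : TotallyNonneg A) : TotallyNonneg Aᵀ := fun k r c hr hc ↦ by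
  rw [← transpose_submatrix, det_transpose]
  exact hA k c r hc hr

lemma map_const_mul (hA : TotallyNonneg A) {a : ℝ} (ha : 0 ≤ a) :
    TotallyNonneg (A.map (a * ·)) := fun k r c hr hc ↦ by
  have submatrix_eq : (A.map (a * ·)).submatrix r c = a • A.submatrix r c := rfl
  rw [submatrix_eq, det_smul]
  exact mul_nonneg (pow_nonneg ha _) (hA k r c hr hc)

lemma vecMulVec {u : Fin m → ℝ} {v : Fin n → ℝ} (hu : ∀ i, 0 ≤ u i) (hv : ∀ j, 0 ≤ v j) :
    TotallyNonneg (vecMulVec u v)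
  | 0, _, _, _, _ => by simp
  | 1, r, c, _, _ => by simpa [vecMulVec_apply] using mul_nonneg (hu (r 0)) (hv (c 0))
  | _ + 2, r, c, _, _ => (det_vecMulVec (u ∘ r) (v ∘ c)).ge

lemma const {a : ℝ} (ha : 0 ≤ a) :
    TotallyNonneg (of fun (_ : Fin m) (_ : Fin n) ↦ a) := by
  simpa only [Matrix.vecMulVec, mul_one] using
    vecMulVec (m := m) (n := n) (fun _ ↦ ha) fun _ ↦ zero_le_one

lemma mul_diagonal (hA : TotallyNonneg A) {d : Fin n → ℝ} (hd : ∀ j, 0 ≤ d j) :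
    TotallyNonneg (A * diagonal d) := fun k r c hr hc ↦ by
  have submatrix_eq : (A * diagonal d).submatrix r c = A.submatrix r c * diagonal (d ∘ c) := by
    ext i j
    simp
  rw [submatrix_eq, det_mul, det_diagonal]
  exact mul_nonneg (hA k r c hr hc) (Finset.prod_nonneg fun j _ ↦ hd (c j))

lemma det_submatrix_mul_det_submatrix_nonneg {B : Matrix (Fin n) (Fin l) ℝ}
    (hA : TotallyNonneg A) (hB : TotallyNonneg B) {k : ℕ} {r : Fin k → Fin m} {c : Fin k → Fin l}
    (hr : StrictMono r) (hc : StrictMono c) (f : Fin k → Fin n) :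
    0 ≤ (A.submatrix r f).det * (B.submatrix f c).det := by
  set σ := Tuple.sort f
  have hsign : ((Equiv.Perm.sign σ : ℤ) : ℝ) * (Equiv.Perm.sign σ : ℤ) = 1 := by
    rw [← Int.cast_mul, Int.units_coe_mul_self, Int.cast_one]
  have det_left : (A.submatrix r (f ∘ σ)).det = Equiv.Perm.sign σ * (A.submatrix r f).det :=
    det_permute' σ (A.submatrix r f)
  have det_right : (B.submatrix (f ∘ σ) c).det = Equiv.Perm.sign σ * (B.submatrix f c).det :=
    det_permute σ (B.submatrix f c)
  suffices h : 0 ≤ (A.submatrix r (f ∘ σ)).det * (B.submatrix (f ∘ σ) c).det by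
    rwa [det_left, det_right, mul_mul_mul_comm, hsign, one_mul] at h
  by_cases hinj : Function.Injective (f ∘ σ)
  · have hmono : StrictMono (f ∘ σ) := (Tuple.monotone_sort f).strictMono_of_injective hinj
    exact mul_nonneg (hA k r _ hr hmono) (hB k _ c hmono hc)
  · obtain ⟨i, j, hij, hne⟩ := Function.not_injective_iff.1 hinj
    have det_eq_zero : (A.submatrix r (f ∘ σ)).det = 0 :=
      det_zero_of_column_eq hne fun a ↦ congrArg (A (r a)) hij
    rw [det_eq_zero, zero_mul]

lemma mul {B : Matrix (Fin n) (Fin l) ℝ} (hA : TotallyNonneg A) (hB : TotallyNonneg B) :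
    TotallyNonneg (A * B) := fun k r c hr hc ↦ by
  have hsum := factorial_card_smul_det_mul (A.submatrix r id) (B.submatrix id c)
  have hnonneg : 0 ≤ k.factorial • ((A * B).submatrix r c).det := by
    rw [Fintype.card_fin] at hsum
    exact (Finset.sum_nonneg fun f _ ↦
      det_submatrix_mul_det_submatrix_nonneg hA hB hr hc f).trans_eq hsum.symm
  rw [nsmul_eq_mul] at hnonneg
  exact nonneg_of_mul_nonneg_right hnonneg (Nat.cast_pos.2 k.factorial_pos)

lemma mul_diagonal_mul_transpose (hA : TotallyNonneg A) {d : Fin n → ℝ} (hd : ∀ j, 0 ≤ d j) :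
    TotallyNonneg (A * diagonal d * Aᵀ) :=
  (hA.mul_diagonal hd).mul hA.transpose

lemma of_tendsto {α : Type*} {l : Filter α} [l.NeBot] {B : α → Matrix (Fin m) (Fin n) ℝ}
    (hlim : Tendsto B l (𝓝 A)) (hB : ∀ a, TotallyNonneg (B a)) : TotallyNonneg A :=
  fun k r c hr hc ↦ by
    have hcont : Continuous fun M : Matrix (Fin m) (Fin n) ℝ ↦ (M.submatrix r c).det :=
      (continuous_id.matrix_submatrix r c).matrix_det
    exact ge_of_tendsto' ((hcont.tendsto A).comp hlim) fun a ↦ hB a k r c hr hc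

lemma map_intCast_of_le_three (hn : n ≤ 3) {A : Matrix (Fin m) (Fin n) ℤ}
    (minor_one : ∀ i j, 0 ≤ A i j)
    (minor_two : ∀ i₁ i₂, i₁ < i₂ → ∀ j₁ j₂, j₁ < j₂ →
      0 ≤ (A.submatrix ![i₁, i₂] ![j₁, j₂]).det)
    (minor_three : ∀ i₁ i₂, i₁ < i₂ → ∀ i₃, i₂ < i₃ → ∀ j₁ j₂, j₁ < j₂ → ∀ j₃, j₂ < j₃ →
      0 ≤ (A.submatrix ![i₁, i₂, i₃] ![j₁, j₂, j₃]).det) :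
    TotallyNonneg (A.map ((↑) : ℤ → ℝ)) := fun k r c hr hc ↦ by
  have det_eq : ((A.map ((↑) : ℤ → ℝ)).submatrix r c).det = ((A.submatrix r c).det : ℝ) :=
    ((Int.castRingHom ℝ).map_det _).symm
  rw [det_eq, Int.cast_nonneg_iff]
  have hk : k ≤ 3 := (by simpa using Fintype.card_le_of_injective c hc.injective : k ≤ n).trans hn
  interval_cases k
  · simp
  · simpa using minor_one (r 0) (c 0)
  · simpa only [det_fin_two, submatrix_apply, cons_val] using
      minor_two (r 0) (r 1) (hr (by decide)) (c 0) (c 1) (hc (by decide))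
  · simpa only [det_fin_three, submatrix_apply, cons_val] using
      minor_three (r 0) (r 1) (hr (by decide)) (r 2) (hr (by decide))
        (c 0) (c 1) (hc (by decide)) (c 2) (hc (by decide))

lemma map_congr (hA : TotallyNonneg A) {F G : ℝ → ℝ} (hFG : ∀ x ≥ 0, F x = G x) :
    A.map F = A.map G :=
  Matrix.ext fun i j ↦ hFG _ (hA.apply_nonneg i j)

end TotallyNonneg

lemma isSymm_mul_diagonal_mul_transpose {R ι κ : Type*} [CommSemiring R] [Fintype κ]
    [DecidableEq κ] (A : Matrix ι κ R) (d : κ → R) : (A * diagonal d * Aᵀ).IsSymm := by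
  simp [IsSymm, transpose_mul, Matrix.mul_assoc]

lemma exists_eq_rpow_of_monotoneOn {f : ℝ → ℝ} (hpos : ∀ x > 0, 0 < f x)
    (hmono : MonotoneOn f (Set.Ioi 0)) (hmul : ∀ x > 0, ∀ y > 0, f (x * y) = f x * f y) :
    ∃ p : ℝ, ∀ x > 0, f x = x ^ p := by
  let φ : ℝ →+ ℝ := AddMonoidHom.mk' (fun t ↦ Real.log (f (Real.exp t))) fun s t ↦ by
    rw [Real.exp_add, hmul _ (Real.exp_pos s) _ (Real.exp_pos t),
      Real.log_mul (hpos _ (Real.exp_pos s)).ne' (hpos _ (Real.exp_pos t)).ne']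
  have φ_mono : Monotone φ := fun s t hst ↦ Real.log_le_log (hpos _ (Real.exp_pos s))
    (hmono (Real.exp_pos s) (Real.exp_pos t) (Real.exp_le_exp.2 hst))
  have φ_cont : Continuous φ :=
    MeasureTheory.Measure.AddMonoidHom.continuous_of_measurable φ φ_mono.measurable
  refine ⟨φ 1, fun x hx ↦ ?_⟩
  have φ_log : φ (Real.log x) = Real.log (f x) :=
    congrArg (fun y ↦ Real.log (f y)) (Real.exp_log hx)
  have φ_linear : φ (Real.log x) = Real.log x * φ 1 := by
    simpa using map_real_smul φ φ_cont (Real.log x) 1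
  rw [Real.rpow_def_of_pos hx, ← φ_linear, φ_log, Real.exp_log (hpos x hx)]

lemma iterate_eq_rpow_pow {f : ℝ → ℝ} {p : ℝ} (hf : ∀ x > 0, f x = x ^ p) (k : ℕ) {x : ℝ}
    (hx : 0 < x) : f^[k] x = x ^ p ^ k := by
  induction k with
  | zero => simp
  | succ k ih =>
    rw [Function.iterate_succ_apply', ih, hf _ (by positivity), ← Real.rpow_mul hx.le, pow_succ]

/-- The totally non-negative matrix with columns `1`, `b`, `c`, where `b = (0, 1, 2, 3, 3)` and
`c = (0, 0, 1, 2, 3)`, from which `counterexampleExponent` is built. -/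
def counterexampleFactor : Matrix (Fin 5) (Fin 3) ℤ :=
  !![1, 0, 0; 1, 1, 0; 1, 2, 1; 1, 3, 2; 1, 3, 3]

/-- The matrix `m = b bᵀ + c cᵀ`, for `b`, `c` as in `counterexampleFactor`. Its entries serve as
exponents, hence are natural numbers: `1 + x * m i j` is totally non-negative for all `x ≥ 0`, while
`y ^ m i j` is not for `y > 1` close to `1`. -/
def counterexampleExponent : Matrix (Fin 5) (Fin 5) ℕ :=
  !![0, 0, 0, 0, 0; 0, 1, 2, 3, 3; 0, 2, 5, 8, 9; 0, 3, 8, 13, 15; 0, 3, 9, 15, 18]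

lemma totallyNonneg_counterexampleFactor :
    TotallyNonneg (counterexampleFactor.map ((↑) : ℤ → ℝ)) :=
  .map_intCast_of_le_three le_rfl (by simp [Fin.forall_fin_succ, counterexampleFactor])
    (by simp only [det_fin_two, submatrix_apply, cons_val]; decide +kernel)
    (by simp only [det_fin_three, submatrix_apply, cons_val]; decide +kernel)

lemma isSymm_counterexampleExponent : counterexampleExponent.IsSymm := by decide

lemma counterexampleExponent_apply (i j : Fin 5) : (counterexampleExponent i j : ℤ) =
    counterexampleFactor i 1 * counterexampleFactor j 1 +
      counterexampleFactor i 2 * counterexampleFactor j 2 := by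
  decide +revert

lemma totallyNonneg_one_add_mul_counterexampleExponent {x : ℝ} (hx : 0 ≤ x) :
    TotallyNonneg (of fun i j ↦ 1 + x * counterexampleExponent i j) := by
  have factorization : (of fun i j ↦ 1 + x * counterexampleExponent i j) =
      counterexampleFactor.map ((↑) : ℤ → ℝ) * diagonal ![1, x, x] *
        (counterexampleFactor.map ((↑) : ℤ → ℝ))ᵀ := by
    ext i j
    have first_column : ∀ i, counterexampleFactor i 0 = 1 := by decide
    have entry_eq := congrArg ((↑) : ℤ → ℝ) (counterexampleExponent_apply i j)
    push_cast at entry_eq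
    rw [of_apply, entry_eq, mul_apply, Fin.sum_univ_three]
    simp only [mul_diagonal, transpose_apply, map_apply, first_column, cons_val, Int.cast_one]
    ring
  rw [factorization]
  exact totallyNonneg_counterexampleFactor.mul_diagonal_mul_transpose
    (by simp [Fin.forall_fin_succ, hx])

lemma det_submatrix_map_pow_counterexampleExponent {R : Type*} [CommRing R] (t : R) :
    ((counterexampleExponent.map (t ^ ·)).submatrix Fin.castSucc Fin.succ).det =
      t ^ 13 * (t - 1) ^ 4 * (t + 1) *
        (t ^ 7 + t ^ 6 + t ^ 5 - t ^ 4 - 2 * t ^ 3 - 2 * t ^ 2 - t - 1) := by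
  simp [counterexampleExponent, det_succ_row_zero, Fin.sum_univ_succ, Fin.succAbove]
  ring

lemma not_totallyNonneg_map_pow_counterexampleExponent :
    ¬ TotallyNonneg (counterexampleExponent.map ((5 / 4 : ℝ) ^ ·)) := fun hTN ↦ by
  have hminor := hTN 4 Fin.castSucc Fin.succ Fin.strictMono_castSucc Fin.strictMono_succ
  rw [det_submatrix_map_pow_counterexampleExponent] at hminor
  norm_num at hminor

/-- `F`, applied entrywise, preserves total non-negativity of symmetric matrices of every size. -/
def PreservesSymmTotallyNonneg (F : ℝ → ℝ) : Prop :=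
  ∀ (n : ℕ) (A : Matrix (Fin n) (Fin n) ℝ), A.IsSymm → TotallyNonneg A → TotallyNonneg (A.map F)

namespace PreservesSymmTotallyNonneg

variable {F : ℝ → ℝ}

lemma const_mul (hF : PreservesSymmTotallyNonneg F) {a : ℝ} (ha : 0 ≤ a) :
    PreservesSymmTotallyNonneg fun x ↦ a * F x :=
  fun n A hsymm hA ↦ (hF n A hsymm hA).map_const_mul ha

lemma iterate (hF : PreservesSymmTotallyNonneg F) (k : ℕ) : PreservesSymmTotallyNonneg F^[k] := by
  induction k with
  | zero => exact fun _ _ _ hA ↦ hA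
  | succ _ ih => exact fun n A hsymm hA ↦ ih n (A.map F) (hsymm.map F) (hF n A hsymm hA)

lemma map_nonneg (hF : PreservesSymmTotallyNonneg F) {x : ℝ} (hx : 0 ≤ x) : 0 ≤ F x :=
  (hF 1 (of fun _ _ ↦ x) rfl (.const hx)).apply_nonneg 0 0

lemma map_mul_mul_map_mul_le (hF : PreservesSymmTotallyNonneg F) {p q r s : ℝ} (hp : 0 ≤ p)
    (hq : 0 ≤ q) (hr : 0 ≤ r) (hs : 0 ≤ s) : F (p * s) * F (q * r) ≤ F (p * r) * F (q * s) := by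
  have hnonneg : ∀ i, 0 ≤ ![p, q, r, s] i := by simp [Fin.forall_fin_succ, *]
  have hminor := hF 4 _ (transpose_vecMulVec _ _) (.vecMulVec hnonneg hnonneg)
    2 ![0, 1] ![2, 3] (by decide) (by decide)
  rw [det_fin_two] at hminor
  simpa [vecMulVec_apply] using hminor

lemma map_mul_mul_map_one (hF : PreservesSymmTotallyNonneg F) {x y : ℝ} (hx : 0 ≤ x)
    (hy : 0 ≤ y) : F (x * y) * F 1 = F x * F y := by
  apply le_antisymm
  · simpa using hF.map_mul_mul_map_mul_le hx zero_le_one zero_le_one hy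
  · simpa using hF.map_mul_mul_map_mul_le hx zero_le_one hy zero_le_one

lemma map_add_le (hF : PreservesSymmTotallyNonneg F) (hF0 : F 0 = 0) {x y : ℝ} (hx : 0 ≤ x)
    (hy : 0 ≤ y) (hFx : 0 < F x) (hFy : 0 < F y) : F x + F y ≤ F (x + y) := by
  have hV : TotallyNonneg (!![1, 0; 1, 1; 0, 1].map ((↑) : ℤ → ℝ)) :=
    .map_intCast_of_le_three (by norm_num) (by simp [Fin.forall_fin_succ])
      (by simp only [det_fin_two, submatrix_apply, cons_val]; decide) (by decide)
  have hd : ∀ i, 0 ≤ ![x, y] i := by simp [Fin.forall_fin_succ, *]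
  have gram_eq : !![1, 0; 1, 1; 0, 1].map ((↑) : ℤ → ℝ) * diagonal ![x, y] *
      (!![1, 0; 1, 1; 0, 1].map ((↑) : ℤ → ℝ))ᵀ = !![x, x, 0; x, x + y, y; 0, y, y] := by
    ext i j
    fin_cases i <;> fin_cases j <;> simp [mul_apply, Fin.sum_univ_succ]
  have hdet := hF 3 _ (isSymm_mul_diagonal_mul_transpose _ _) (hV.mul_diagonal_mul_transpose hd)
    3 id id strictMono_id strictMono_id
  have det_eq : ((!![x, x, 0; x, x + y, y; 0, y, y].map F).submatrix id id).det =
      F x * F y * (F (x + y) - (F x + F y)) := by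
    simp [det_fin_three, hF0]
    ring
  rw [gram_eq, det_eq] at hdet
  exact sub_nonneg.1 (nonneg_of_mul_nonneg_right hdet (mul_pos hFx hFy))

lemma totallyNonneg_map_exp (hF : PreservesSymmTotallyNonneg F) {p : ℝ} (hp : 1 < p)
    (hpow : ∀ x > 0, F x = x ^ p) {n : ℕ} {M : Matrix (Fin n) (Fin n) ℝ} (hM : M.IsSymm)
    (hM_nonneg : ∀ i j, 0 ≤ M i j) (hTN : ∀ x ≥ 0, TotallyNonneg (of fun i j ↦ 1 + x * M i j)) :
    TotallyNonneg (M.map Real.exp) := by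
  have hlim : Tendsto (p ^ · : ℕ → ℝ) atTop atTop := tendsto_pow_atTop_atTop_of_one_lt hp
  refine TotallyNonneg.of_tendsto (l := atTop)
    (B := fun k : ℕ ↦ (of fun i j ↦ 1 + (p ^ k)⁻¹ * M i j).map F^[k]) ?_ fun k ↦ ?_
  · refine tendsto_pi_nhds.2 fun i ↦ tendsto_pi_nhds.2 fun j ↦ ?_
    refine ((Real.tendsto_one_add_div_rpow_exp (M i j)).comp hlim).congr fun k ↦ ?_
    have hpos : 0 < 1 + (p ^ k)⁻¹ * M i j := by have := hM_nonneg i j; positivity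
    simp [iterate_eq_rpow_pow hpow k hpos, div_eq_inv_mul]
  · refine hF.iterate k n _ ?_ (hTN _ (by positivity))
    ext i j
    simp [hM.apply i j]

lemma exponent_le_one (hF : PreservesSymmTotallyNonneg F) {p : ℝ} (hpow : ∀ x > 0, F x = x ^ p) :
    p ≤ 1 := by
  by_contra! hp
  have hlog : 0 ≤ Real.log (5 / 4) := Real.log_nonneg (by norm_num)
  let M : Matrix (Fin 5) (Fin 5) ℝ := counterexampleExponent.map fun k ↦ k * Real.log (5 / 4)
  have hTN : ∀ x ≥ 0, TotallyNonneg (of fun i j ↦ 1 + x * M i j) := fun x hx ↦ by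
    convert! totallyNonneg_one_add_mul_counterexampleExponent (mul_nonneg hx hlog) using 5
    simp only [M, map_apply]
    ring
  have map_exp : M.map Real.exp = counterexampleExponent.map ((5 / 4 : ℝ) ^ ·) := by
    ext i j
    simp only [M, map_apply, Real.exp_nat_mul, Real.exp_log (by norm_num : (0 : ℝ) < 5 / 4)]
  refine not_totallyNonneg_map_pow_counterexampleExponent (map_exp ▸ ?_)
  exact hF.totallyNonneg_map_exp hp hpow (isSymm_counterexampleExponent.map _)
    (fun i j ↦ mul_nonneg (Nat.cast_nonneg _) hlog) hTN

lemma map_pos (hF : PreservesSymmTotallyNonneg F) (hF1 : F 1 ≠ 0) {x : ℝ} (hx : 0 < x) :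
    0 < F x := by
  refine (hF.map_nonneg hx.le).lt_of_ne' fun hFx ↦ hF1 ?_
  have hmul := hF.map_mul_mul_map_one hx.le (inv_nonneg.2 hx.le)
  rw [mul_inv_cancel₀ hx.ne', hFx, zero_mul] at hmul
  exact mul_self_eq_zero.1 hmul

lemma monotoneOn (hF : PreservesSymmTotallyNonneg F) (hF0 : F 0 = 0) (hF1 : F 1 ≠ 0) :
    MonotoneOn F (Set.Ioi 0) := fun x hx y _ hxy ↦ by
  rcases hxy.eq_or_lt with rfl | hlt
  · rfl
  · have hdiff : 0 < y - x := sub_pos.2 hlt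
    have hadd := hF.map_add_le hF0 (le_of_lt hx) hdiff.le (hF.map_pos hF1 hx)
      (hF.map_pos hF1 hdiff)
    rw [add_sub_cancel] at hadd
    exact (le_add_of_nonneg_right (hF.map_nonneg hdiff.le)).trans hadd

lemma map_eq_self (hF : PreservesSymmTotallyNonneg F) (hF0 : F 0 = 0) (hF1 : F 1 = 1) {x : ℝ}
    (hx : 0 ≤ x) : F x = x := by
  have hF1_ne : F 1 ≠ 0 := by simp [hF1]
  have hmul : ∀ x > 0, ∀ y > 0, F (x * y) = F x * F y := fun x hx y hy ↦ by
    rw [← hF.map_mul_mul_map_one hx.le hy.le, hF1, mul_one]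
  obtain ⟨p, hpow⟩ := exists_eq_rpow_of_monotoneOn (fun _ ↦ hF.map_pos hF1_ne)
    (hF.monotoneOn hF0 hF1_ne) hmul
  have one_le_p : 1 ≤ p := by
    have htwo := hF.map_add_le hF0 zero_le_one zero_le_one (hF.map_pos hF1_ne one_pos)
      (hF.map_pos hF1_ne one_pos)
    rw [hF1, hpow _ (by norm_num), one_add_one_eq_two] at htwo
    rwa [← Real.rpow_le_rpow_left_iff one_lt_two, Real.rpow_one]
  have p_eq_one : p = 1 := (hF.exponent_le_one hpow).antisymm one_le_p
  rcases hx.eq_or_lt with rfl | hx_pos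
  · exact hF0
  · rw [hpow x hx_pos, p_eq_one, Real.rpow_one]

lemma eq_const_or_eq_mul (hF : PreservesSymmTotallyNonneg F) :
    (∀ x ≥ 0, F x = F 1) ∨ ∀ x ≥ 0, F x = F 1 * x := by
  rcases eq_or_ne (F 0) 0 with hF0 | hF0
  · rcases eq_or_ne (F 1) 0 with hF1 | hF1
    · refine .inl fun x hx ↦ ?_
      have hsq := hF.map_mul_mul_map_one hx hx
      rw [hF1, mul_zero] at hsq
      rw [hF1, mul_self_eq_zero.1 hsq.symm]
    · refine .inr fun x hx ↦ ?_
      have hnormalized := (hF.const_mul (inv_nonneg.2 (hF.map_nonneg zero_le_one))).map_eq_self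
        (by simp [hF0]) (inv_mul_cancel₀ hF1) hx
      exact (inv_mul_eq_iff_eq_mul₀ hF1).1 hnormalized
  · refine .inl fun x hx ↦ ?_
    have hzero := hF.map_mul_mul_map_one le_rfl hx
    rw [zero_mul] at hzero
    exact (mul_left_cancel₀ hF0 hzero).symm

end PreservesSymmTotallyNonneg

/-- The entrywise preservers of total non-negativity on all rectangular matrices, or on
all symmetric matrices, are exactly the constant or linear maps `x ↦ c` or `x ↦ c x`
with `c ≥ 0`. -/
theorem totally_nonneg_preserver_TFAE (F : ℝ → ℝ) :
    List.TFAE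
      [∀ (m n : ℕ) (A : Matrix (Fin m) (Fin n) ℝ), TotallyNonneg A →
          TotallyNonneg (A.map F),
        ∀ (n : ℕ) (A : Matrix (Fin n) (Fin n) ℝ), A.IsSymm → TotallyNonneg A →
          TotallyNonneg (A.map F),
        ∃ c : ℝ, 0 ≤ c ∧
          ((∀ x ≥ (0 : ℝ), F x = c) ∨ (∀ x ≥ (0 : ℝ), F x = c * x))] := by
  tfae_have 1 → 2 := fun h n A _ hA ↦ h n n A hA
  tfae_have 2 → 3 := fun (h : PreservesSymmTotallyNonneg F) ↦
    ⟨F 1, h.map_nonneg zero_le_one, h.eq_const_or_eq_mul⟩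
  tfae_have 3 → 1 := by
    rintro ⟨c, hc, hconst | hlinear⟩ m n A hA
    · rw [hA.map_congr hconst]
      exact .const hc
    · rw [hA.map_congr hlinear]
      exact hA.map_const_mul hc
  tfae_finish
end

section
/- For a function F : ℝ → ℝ, the following are equivalent: (1) F applied entrywise maps the union over u ∈ (0,1) of the sets M({−1,u,1}) into M(ℝ); (2) F applied entrywise maps M([−1,1]) into M(ℝ); (3) F is the restriction to ℝ of an absolutely monotonic entire function. -/
open MeasureTheory Filter Set
open scoped ENNReal

/-- An admissible measure: a non-negative Borel measure on `ℝ` all of whose absolute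
moments are finite. -/
def IsAdmissible (μ : Measure ℝ) : Prop := ∀ k : ℕ, Integrable (fun x => x ^ k) μ

/-- The `k`-th power moment of a measure. -/
noncomputable def moment (μ : Measure ℝ) (k : ℕ) : ℝ := ∫ x, x ^ k ∂μ

/-- `momentSet K` is the set of moment sequences of admissible measures supported in `K`. -/
def momentSet (K : Set ℝ) : Set (ℕ → ℝ) :=
  {s | ∃ μ : Measure ℝ, IsAdmissible μ ∧ μ Kᶜ = 0 ∧ ∀ k, s k = moment μ k}

/-- An absolutely monotonic entire function: a power series with non-negative
coefficients converging at every real point. -/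
def AbsolutelyMonotonicEntire (G : ℝ → ℝ) : Prop :=
  ∃ c : ℕ → ℝ, (∀ n, 0 ≤ c n) ∧ ∀ x : ℝ, HasSum (fun n => c n * x ^ n) (G x)

/-!
Suppose that `F` acts on the moments of measures on `{-1, u, 1}`. Nonnegativity of the second
Hankel minors gives `F z ^ 2 ≤ F x * F y` whenever `z ^ 2 ≤ x * y`, so `F` is nondecreasing on
`(0, ∞)`. The even moments of the image measure are then bounded, which forces its support into
`[-1, 1]`, and every polynomial that is nonnegative on `[-1, 1]` yields an inequality for `F`:

* `(1 ± x) * (1 - x ^ 2)` bounds the oscillation of `F` near any point by that of `F` near a point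
  of `(0, ∞)` of our choice. A monotone function has continuity points, so `F` is continuous.
* `(1 ± x) * x ^ (2 * i) * (1 - x ^ 2) ^ j` shows that the Bernstein approximations of
  `t ↦ F (β + exp t) ± F (α + exp t)`, for `|α| ≤ β`, have nonnegative coefficients in powers of
  `t`. A limit of such polynomials is a power series, so `F` is real analytic.
* A nonnegative `p` vanishing at `u ^ k` for `k < n`, tested against `k ↦ F (a + b * u ^ k)` as
  `b → 0`, gives `0 ≤ p (u ^ n) * F⁽ⁿ⁾ a`. So all derivatives of `F` are nonnegative on `[0, ∞)`,
  and then the Taylor series of `F` at `0` converges everywhere.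

Conversely, moment sequences on `[-1, 1]` are closed under entrywise products, nonnegative
multiples and convergent sums.
-/

section MomentSet

variable {K L M : Set ℝ} {s t : ℕ → ℝ}

lemma IsAdmissible.isFiniteMeasure {μ : Measure ℝ} (hμ : IsAdmissible μ) : IsFiniteMeasure μ :=
  (integrable_const_iff_isFiniteMeasure one_ne_zero).1 (by simpa only [pow_zero] using hμ 0)

lemma momentSet_mono (hKL : K ⊆ L) : momentSet K ⊆ momentSet L := fun _ ⟨μ, hμ, hμK, hs⟩ =>
  ⟨μ, hμ, measure_mono_null (compl_subset_compl.2 hKL) hμK, hs⟩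

lemma pow_mem_momentSet {x : ℝ} (hx : x ∈ K) : (x ^ ·) ∈ momentSet K :=
  ⟨Measure.dirac x, fun _ => integrable_dirac enorm_lt_top, by simp [hx],
    fun k => by simp [moment]⟩

lemma add_mem_momentSet (hs : s ∈ momentSet K) (ht : t ∈ momentSet K) :
    s + t ∈ momentSet K := by
  obtain ⟨μ, hμ, hμK, hs⟩ := hs
  obtain ⟨ν, hν, hνK, ht⟩ := ht
  refine ⟨μ + ν, fun k => (hμ k).add_measure (hν k), by simp [hμK, hνK], fun k => ?_⟩
  rw [Pi.add_apply, hs, ht, moment, moment, moment, integral_add_measure (hμ k) (hν k)]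

lemma smul_mem_momentSet {a : ℝ} (ha : 0 ≤ a) (hs : s ∈ momentSet K) :
    a • s ∈ momentSet K := by
  obtain ⟨μ, hμ, hμK, hs⟩ := hs
  refine ⟨ENNReal.ofReal a • μ, fun k => (hμ k).smul_measure ENNReal.ofReal_ne_top,
    by simp [hμK], fun k => ?_⟩
  rw [Pi.smul_apply, hs, moment, moment, integral_smul_measure, ENNReal.toReal_ofReal ha]

lemma add_mul_pow_add_mul_neg_one_pow_mem_momentSet {a b c u : ℝ} (ha : 0 ≤ a) (hb : 0 ≤ b)
    (hc : 0 ≤ c) : (fun k => a + b * u ^ k + c * (-1) ^ k) ∈ momentSet {-1, u, 1} := by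
  have pow_mem (x : ℝ) (hx : x ∈ ({-1, u, 1} : Set ℝ)) := pow_mem_momentSet hx
  have := add_mem_momentSet
    (add_mem_momentSet (smul_mem_momentSet ha (pow_mem 1 (by simp)))
      (smul_mem_momentSet hb (pow_mem u (by simp))))
    (smul_mem_momentSet hc (pow_mem (-1) (by simp)))
  simpa [Pi.add_def, Pi.smul_def] using this

lemma mul_mem_momentSet (hM : MeasurableSet M) (hKL : ∀ x ∈ K, ∀ y ∈ L, x * y ∈ M)
    (hs : s ∈ momentSet K) (ht : t ∈ momentSet L) : s * t ∈ momentSet M := by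
  obtain ⟨μ, hμ, hμK, hs⟩ := hs
  obtain ⟨ν, hν, hνL, ht⟩ := ht
  have := hμ.isFiniteMeasure
  have := hν.isFiniteMeasure
  have hmul : AEMeasurable (fun z : ℝ × ℝ => z.1 * z.2) (μ.prod ν) := by fun_prop
  refine ⟨(μ.prod ν).map fun z => z.1 * z.2, fun k => ?_, ?_, fun k => ?_⟩
  · rw [integrable_map_measure (by fun_prop) hmul]
    simpa only [Function.comp_def, mul_pow] using (hμ k).mul_prod (hν k)
  · refine (ae_map_iff hmul hM).2 ?_
    filter_upwards [Measure.quasiMeasurePreserving_fst.ae hμK,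
      Measure.quasiMeasurePreserving_snd.ae hνL] with z hz₁ hz₂ using hKL _ hz₁ _ hz₂
  · rw [Pi.mul_apply, hs, ht, moment, moment, moment, integral_map hmul (by fun_prop),
      ← integral_prod_mul]
    simp only [mul_pow]

lemma pow_mem_momentSet_Icc (hs : s ∈ momentSet (Icc (-1) 1)) (n : ℕ) :
    s ^ n ∈ momentSet (Icc (-1) 1) := by
  induction n with
  | zero => simpa using! pow_mem_momentSet (K := Icc (-1) 1) (x := 1) (by norm_num)
  | succ n ih =>
    rw [pow_succ]
    refine mul_mem_momentSet measurableSet_Icc (fun x hx y hy => ?_) ih hs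
    rw [mem_Icc, ← abs_le] at hx hy ⊢
    rw [abs_mul]
    exact mul_le_one₀ hx (abs_nonneg y) hy

lemma mem_momentSet_of_hasSum (hK : K ⊆ Icc (-1) 1) {S : ℕ → ℕ → ℝ}
    (hS : ∀ n, S n ∈ momentSet K) (hs : ∀ k, HasSum (fun n => S n k) (s k)) :
    s ∈ momentSet K := by
  choose μ hμ hμK hSμ using hS
  have integral_norm_pow_le (n k : ℕ) : ∫ x, ‖x ^ k‖ ∂μ n ≤ S n 0 := by
    rw [hSμ n 0]
    refine integral_mono_ae (hμ n k).norm (hμ n 0) ?_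
    have hμK : ∀ᵐ x ∂μ n, x ∈ K := hμK n
    filter_upwards [hμK] with x hx
    rw [norm_pow, pow_zero]
    exact pow_le_one₀ (norm_nonneg x) (abs_le.2 (hK hx))
  have isAdmissible_sum : IsAdmissible (Measure.sum μ) := fun k =>
    integrable_sum_measure (hμ · k) <| (hs 0).summable.of_nonneg_of_le
      (fun n => integral_nonneg fun x => norm_nonneg _) (integral_norm_pow_le · k)
  refine ⟨Measure.sum μ, isAdmissible_sum, Measure.sum_apply_eq_zero.2 hμK, fun k => ?_⟩
  have := hasSum_integral_measure (isAdmissible_sum k)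
  exact (hs k).unique (by simpa only [hSμ, moment] using this)

lemma mem_momentSet_Icc_of_even_le {C : ℝ} (hs : s ∈ momentSet univ) (hC : ∀ m, s (2 * m) ≤ C) :
    s ∈ momentSet (Icc (-1) 1) := by
  obtain ⟨μ, hμ, -, hs⟩ := hs
  have := hμ.isFiniteMeasure
  suffices hμ_abs : ∀ᵐ x ∂μ, |x| ≤ 1 from ⟨μ, hμ, hμ_abs.mono fun x => abs_le.1, hs⟩
  refine (ae_le_const_iff_forall_gt_measure_zero _ _).2 fun r hr => ?_
  by_contra hne
  have hpos : 0 < μ.real {x | r ≤ |x|} := ENNReal.toReal_pos hne (measure_ne_top _ _)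
  obtain ⟨n, hn⟩ :=
    pow_unbounded_of_one_lt (C / μ.real {x | r ≤ |x|}) (one_lt_pow₀ hr two_ne_zero)
  rw [div_lt_iff₀ hpos, ← pow_mul] at hn
  refine hn.not_ge ?_
  calc r ^ (2 * n) * μ.real {x | r ≤ |x|}
      ≤ r ^ (2 * n) * μ.real {x | r ^ (2 * n) ≤ x ^ (2 * n)} := by
        gcongr ?_ * ?_
        refine measureReal_mono fun x (hx : r ≤ |x|) => ?_
        rw [mem_ofPred_eq, ← (even_two_mul n).pow_abs x]
        gcongr
    _ ≤ ∫ x, x ^ (2 * n) ∂μ := mul_meas_ge_le_integral_of_nonneg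
        (Eventually.of_forall fun x => (even_two_mul n).pow_nonneg x) (hμ _) _
    _ ≤ C := by simpa only [hs, moment] using hC n

lemma AbsolutelyMonotonicEntire.comp_mem_momentSet_Icc {F : ℝ → ℝ}
    (hF : AbsolutelyMonotonicEntire F) (hs : s ∈ momentSet (Icc (-1) 1)) :
    (fun k => F (s k)) ∈ momentSet (Icc (-1) 1) := by
  obtain ⟨c, hc, hF⟩ := hF
  exact mem_momentSet_of_hasSum Subset.rfl
    (fun n => smul_mem_momentSet (hc n) (pow_mem_momentSet_Icc hs n)) fun k => hF (s k)

end MomentSet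

section RieszFunctional

open Polynomial

variable {K : Set ℝ} {s : ℕ → ℝ}

/-- The Riesz functional `L_s` of a sequence `s`, that is, the linear functional on real polynomials
with `L_s (X ^ k) = s k`. It is integration against `μ` when `s` is the moment sequence of `μ`. -/
noncomputable def rieszFunctional (s : ℕ → ℝ) : ℝ[X] →ₗ[ℝ] ℝ :=
  lsum fun k => s k • LinearMap.id

lemma rieszFunctional_X_pow (s : ℕ → ℝ) (k : ℕ) : rieszFunctional s (X ^ k) = s k := by
  simp [rieszFunctional, lsum_apply, ← monomial_one_right_eq_X_pow]

lemma rieszFunctional_eq_sum_range (s : ℕ → ℝ) (p : ℝ[X]) :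
    rieszFunctional s p = ∑ k ∈ Finset.range (p.natDegree + 1), p.coeff k * s k := by
  conv_lhs => rw [p.as_sum_range_C_mul_X_pow]
  simp only [← smul_eq_C_mul, map_sum, map_smul, rieszFunctional_X_pow, smul_eq_mul]

lemma rieszFunctional_nonneg (hs : s ∈ momentSet K) {p : ℝ[X]} (hp : ∀ x ∈ K, 0 ≤ p.eval x) :
    0 ≤ rieszFunctional s p := by
  obtain ⟨μ, hμ, hμK, hs⟩ := hs
  have rieszFunctional_eq_integral : rieszFunctional s p = ∫ x, p.eval x ∂μ := by
    simp only [eval_eq_sum_range, rieszFunctional_eq_sum_range, hs, moment]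
    rw [integral_finsetSum _ fun k _ => (hμ k).const_mul _]
    simp only [integral_const_mul]
  rw [rieszFunctional_eq_integral]
  have hμK : ∀ᵐ x ∂μ, x ∈ K := hμK
  exact integral_nonneg_of_ae (hμK.mono hp)

lemma apply_zero_nonneg_of_mem_momentSet (hs : s ∈ momentSet K) : 0 ≤ s 0 := by
  rw [← rieszFunctional_X_pow s 0]
  exact rieszFunctional_nonneg hs fun x _ => by simp

lemma sq_apply_one_le_of_mem_momentSet (hs : s ∈ momentSet K) : s 1 ^ 2 ≤ s 0 * s 2 := by
  have quadratic_nonneg (t : ℝ) : 0 ≤ s 0 * (t * t) + 2 * s 1 * t + s 2 := by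
    have := rieszFunctional_nonneg hs (p := (t * t) • X ^ 0 + (2 * t) • X ^ 1 + X ^ 2)
      fun x _ => by
        simp only [eval_add, eval_smul, eval_pow, eval_X, smul_eq_mul]
        nlinarith [sq_nonneg (t + x)]
    simp only [map_add, map_smul, rieszFunctional_X_pow, smul_eq_mul] at this
    linarith
  have := discrim_le_zero quadratic_nonneg
  rw [discrim] at this
  linarith

lemma rieszFunctional_even_add_odd (s : ℕ → ℝ) (ε : ℝ) (q : ℝ[X]) :
    rieszFunctional (fun k => s (2 * k) + ε * s (2 * k + 1)) q =
      rieszFunctional s ((1 + ε • X) * expand ℝ 2 q) := by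
  induction q using Polynomial.induction_on' with
  | add p q hp hq => rw [map_add, hp, hq, map_add, mul_add, map_add]
  | monomial k a =>
    rw [← smul_X_eq_monomial, map_smul, map_smul, mul_smul_comm, map_smul, rieszFunctional_X_pow,
      expand_eq_comp_X_pow, X_pow_comp, ← pow_mul, add_mul, one_mul, smul_mul_assoc, ← pow_succ',
      map_add, map_smul, rieszFunctional_X_pow, rieszFunctional_X_pow, smul_eq_mul ε]

lemma rieszFunctional_even_add_odd_nonneg (hs : s ∈ momentSet (Icc (-1) 1)) {ε : ℝ} (hε : |ε| ≤ 1)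
    {q : ℝ[X]} (hq : ∀ t ∈ Icc (0 : ℝ) 1, 0 ≤ q.eval t) :
    0 ≤ rieszFunctional (fun k => s (2 * k) + ε * s (2 * k + 1)) q := by
  rw [rieszFunctional_even_add_odd]
  refine rieszFunctional_nonneg hs fun x hx => ?_
  rw [mem_Icc, ← abs_le] at hx
  have hεx : |ε * x| ≤ 1 := by
    rw [abs_mul]
    exact mul_le_one₀ hε (abs_nonneg x) hx
  simp only [eval_mul, eval_add, eval_one, eval_smul, eval_X, smul_eq_mul, expand_eval]
  refine mul_nonneg ?_ (hq _ ⟨sq_nonneg x, (sq_le_one_iff_abs_le_one x).2 hx⟩)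
  linarith [neg_le_of_abs_le hεx]

lemma abs_odd_sub_le_even_sub_of_mem_momentSet_Icc (hs : s ∈ momentSet (Icc (-1) 1)) :
    |s 1 - s 3| ≤ s 0 - s 2 := by
  have pairing_nonneg (ε : ℝ) (hε : |ε| ≤ 1) : 0 ≤ s 0 - s 2 + ε * (s 1 - s 3) := by
    have := rieszFunctional_even_add_odd_nonneg hs hε (q := X ^ 0 - X ^ 1)
      fun t ht => by simpa using ht.2
    simp only [map_sub, rieszFunctional_X_pow] at this
    linarith
  have := pairing_nonneg 1 (by simp)
  have := pairing_nonneg (-1) (by simp)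
  rw [abs_le]
  constructor <;> linarith

lemma sum_pow_smul_bernsteinPolynomial (N : ℕ) (t : ℝ) :
    ∑ j : Fin (N + 1), t ^ (N - j : ℕ) • bernsteinPolynomial ℝ N j =
      (C (1 - t) * X + C t) ^ N := by
  rw [show C (1 - t) * X + C t = X + C t * (1 - X) by rw [C_sub, C_1]; ring, add_pow,
    Finset.sum_range]
  refine Finset.sum_congr rfl fun j _ => ?_
  rw [bernsteinPolynomial, smul_eq_C_mul, C_pow, mul_pow]
  ring

lemma coeff_linear_pow_nonneg {a b : ℝ} (ha : 0 ≤ a) (hb : 0 ≤ b) (N m : ℕ) :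
    0 ≤ ((C a * X + C b) ^ N).coeff m := by
  rw [add_pow, finsetSum_coeff]
  refine Finset.sum_nonneg fun i _ => ?_
  rw [mul_pow, ← C_pow, ← C_pow, ← C_eq_natCast, coeff_mul_C, coeff_mul_C, coeff_C_mul, coeff_X_pow]
  positivity

lemma coeff_sum_smul_bernsteinPolynomial_nonneg {r : ℕ → ℝ}
    (hr : ∀ q : ℝ[X], (∀ t ∈ Icc (0 : ℝ) 1, 0 ≤ q.eval t) → 0 ≤ rieszFunctional r q) (N m : ℕ) :
    0 ≤ (∑ j : Fin (N + 1), r (N - j) • bernsteinPolynomial ℝ N j).coeff m := by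
  have pairing_nonneg := hr
    (∑ j : Fin (N + 1), (bernsteinPolynomial ℝ N j).coeff m • X ^ (N - j : ℕ)) fun t ht => by
      have := coeff_linear_pow_nonneg (sub_nonneg.2 ht.2) ht.1 N m
      rw [← sum_pow_smul_bernsteinPolynomial] at this
      simpa [eval_finsetSum, mul_comm] using this
  simpa [rieszFunctional_X_pow, mul_comm] using pairing_nonneg

lemma iteratedDeriv_rieszFunctional_comp_add_mul_pow {F : ℝ → ℝ} {m : ℕ} (hF : ContDiff ℝ m F)
    (a u : ℝ) (p : ℝ[X]) :
    iteratedDeriv m (fun b => rieszFunctional (fun k => F (a + b * u ^ k)) p) 0 =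
      p.eval (u ^ m) * iteratedDeriv m F a := by
  have contDiff_comp (k : ℕ) : ContDiff ℝ m fun b => F (a + u ^ k * b) := hF.comp (by fun_prop)
  simp only [rieszFunctional_eq_sum_range, mul_comm _ (u ^ _)]
  rw [iteratedDeriv_fun_sum fun k _ => (contDiff_const.mul (contDiff_comp k)).contDiffAt,
    eval_eq_sum_range, Finset.sum_mul]
  refine Finset.sum_congr rfl fun k _ => ?_
  rw [iteratedDeriv_const_mul_field,
    iteratedDeriv_comp_const_mul (f := fun z => F (a + z)) (hF.comp (by fun_prop)),
    iteratedDeriv_comp_const_add, ← pow_mul, ← pow_mul, mul_comm k m]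
  simp only [mul_zero, add_zero, mul_assoc]

lemma exists_polynomial_nonneg_eq_zero_on_pos_at {S : Finset ℝ} {x : ℝ} (hx : x ∉ S) :
    ∃ p : ℝ[X], (∀ y, 0 ≤ p.eval y) ∧ (∀ y ∈ S, p.eval y = 0) ∧ 0 < p.eval x := by
  refine ⟨(∏ y ∈ S, (X - C y)) ^ 2, fun y => ?_, fun y hy => ?_, ?_⟩
  · rw [eval_pow]
    positivity
  · rw [eval_pow, eval_prod, Finset.prod_eq_zero hy (by simp), zero_pow two_ne_zero]
  · rw [eval_pow, eval_prod, sq_pos_iff]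
    refine Finset.prod_ne_zero_iff.2 fun y hy => ?_
    rw [eval_sub, eval_X, eval_C, sub_ne_zero]
    rintro rfl
    exact hx hy

end RieszFunctional

section RealAnalysis

open Polynomial unitInterval Topology
open scoped NNReal Nat

lemma le_of_forall_lt_sq_le_mul {F : ℝ → ℝ} {w z c : ℝ} (hwz : w < z) (hc : 0 ≤ c)
    (hF : ∀ y ∈ Ico w z, 0 ≤ F y)
    (hsq : ∀ y ∈ Ico w z, ∀ v, y < v → v ≤ z → F v ^ 2 ≤ c * F y) : F z ≤ c := by
  by_contra! hlt
  have hFz : 0 < F z := hc.trans_lt hlt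
  have hc : 0 < c := by
    have hw : w ∈ Ico w z := ⟨le_rfl, hwz⟩
    exact pos_of_mul_pos_left ((pow_pos hFz 2).trans_le (hsq w hw z hwz le_rfl)) (hF w hw)
  -- The infimum `m` of `F` just below `z` satisfies both `c < m` and `m ^ 2 ≤ c * m`.
  have nonempty : (F '' Ico w z).Nonempty := (nonempty_Ico.2 hwz).image F
  have bddBelow : BddBelow (F '' Ico w z) := ⟨0, forall_mem_image.2 hF⟩
  set m := sInf (F '' Ico w z)
  have lt_m : c < m := by
    refine lt_of_lt_of_le ?_ (le_csInf nonempty (a := F z ^ 2 / c) ?_)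
    · rw [lt_div_iff₀ hc]
      nlinarith
    · exact forall_mem_image.2 fun y hy => (div_le_iff₀' hc).2 (hsq y hy z hy.2 le_rfl)
  have m_le : m ^ 2 / c ≤ m := by
    refine le_csInf nonempty (forall_mem_image.2 fun y hy => (div_le_iff₀' hc).2 ?_)
    have hy_mid : y < (y + z) / 2 := by linarith [hy.2]
    have hmid_z : (y + z) / 2 < z := by linarith [hy.2]
    have : m ≤ F ((y + z) / 2) :=
      csInf_le bddBelow (mem_image_of_mem F ⟨hy.1.trans hy_mid.le, hmid_z⟩)
    exact (pow_le_pow_left₀ (by linarith) this 2).trans (hsq y hy _ hy_mid hmid_z.le)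
  rw [div_le_iff₀ hc] at m_le
  nlinarith

lemma monotoneOn_Ioi_of_sq_le_mul {F : ℝ → ℝ} (hF : ∀ x, 0 < x → 0 ≤ F x)
    (hsq : ∀ x y z, 0 < y → y < z → z < x → z ^ 2 ≤ x * y → F z ^ 2 ≤ F x * F y) :
    MonotoneOn F (Ioi 0) := by
  intro z (hz : 0 < z) x (hx : 0 < x) hzx
  obtain rfl | hzx := hzx.eq_or_lt
  · rfl
  have hw : 0 < z ^ 2 / x := by positivity
  have hwz : z ^ 2 / x < z := by rw [div_lt_iff₀ hx]; nlinarith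
  refine le_of_forall_lt_sq_le_mul hwz (hF x hx) (fun y hy => hF y (hw.trans_le hy.1))
    fun y hy v hyv hvz => ?_
  have hy₀ : 0 < y := hw.trans_le hy.1
  have := (div_le_iff₀' hx).1 hy.1
  exact hsq x y v hy₀ hyv (hvz.trans_lt hzx) (by nlinarith)

lemma exists_gt_continuousAt_of_monotoneOn_Ioi {f : ℝ → ℝ} {a : ℝ} (hf : MonotoneOn f (Ioi a))
    (b : ℝ) : ∃ y > b, ContinuousAt f y := by
  obtain ⟨y, hy, hby⟩ := (hf.countable_not_continuousWithinAt.dense_compl ℝ).exists_mem_open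
    isOpen_Ioi (nonempty_Ioi (a := max a b))
  rw [mem_Ioi, max_lt_iff] at hby
  refine ⟨y, hby.2, ?_⟩
  have : ContinuousWithinAt f (Ioi a) y := by
    by_contra h
    exact hy ⟨hby.1, h⟩
  exact this.continuousAt (Ioi_mem_nhds hby.1)

lemma coeff_le_eval_one {p : ℝ[X]} (hp : ∀ m, 0 ≤ p.coeff m) (m : ℕ) : p.coeff m ≤ p.eval 1 := by
  rw [eval_eq_sum, Polynomial.sum]
  by_cases hm : m ∈ p.support
  · simpa using Finset.single_le_sum (fun i _ => hp i) hm
  · simpa [notMem_support_iff.1 hm] using Finset.sum_nonneg fun i _ => hp i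

lemma exists_hasSum_of_tendsto_polynomial_eval {P : ℕ → ℝ[X]} {H : ℝ → ℝ}
    (hP : ∀ᶠ N in atTop, ∀ m, 0 ≤ (P N).coeff m)
    (hH : ∀ x ∈ Icc (0 : ℝ) 1, Tendsto (fun N => (P N).eval x) atTop (𝓝 (H x))) :
    ∃ c : ℕ → ℝ, ∀ x ∈ Ico (0 : ℝ) 1, HasSum (fun m => c m * x ^ m) (H x) := by
  let U : Ultrafilter ℕ := hyperfilter ℕ
  have hU : (U : Filter ℕ) ≤ atTop := Nat.hyperfilter_le_atTop
  have coeff_mem : ∀ᶠ N in atTop, ∀ m, (P N).coeff m ∈ Icc 0 (H 1 + 1) := by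
    filter_upwards [hP, (hH 1 (by simp)).eventually_le_const (lt_add_one _)] with N hPN hN m
    exact ⟨hPN m, (coeff_le_eval_one hPN m).trans hN⟩
  have exists_limit (m : ℕ) :
      ∃ c ∈ Icc 0 (H 1 + 1), Tendsto (fun N => (P N).coeff m) U (𝓝 c) :=
    isCompact_Icc.ultrafilter_le_nhds (U.map fun N => (P N).coeff m)
      (le_principal_iff.2 (hU (coeff_mem.mono fun N hN => hN m)))
  choose c hc hcU using exists_limit
  refine ⟨c, fun x hx => ?_⟩
  have summable_bound : Summable fun m => (H 1 + 1) * x ^ m :=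
    (summable_geometric_of_lt_one hx.1 hx.2).mul_left _
  have summable_limit : Summable fun m => c m * x ^ m :=
    summable_bound.of_nonneg_of_le (fun m => mul_nonneg (hc m).1 (pow_nonneg hx.1 m))
      fun m => mul_le_mul_of_nonneg_right (hc m).2 (pow_nonneg hx.1 m)
  have tendsto_tsum : Tendsto (fun N => ∑' m, (P N).coeff m * x ^ m) U (𝓝 (∑' m, c m * x ^ m)) :=
    tendsto_tsum_of_dominated_convergence summable_bound (fun m => (hcU m).mul_const _) <| by
      filter_upwards [hU coeff_mem] with N hN m
      rw [Real.norm_of_nonneg (mul_nonneg (hN m).1 (pow_nonneg hx.1 m))]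
      exact mul_le_mul_of_nonneg_right (hN m).2 (pow_nonneg hx.1 m)
  have tsum_eq_eval (N : ℕ) : ∑' m, (P N).coeff m * x ^ m = (P N).eval x := by
    rw [eval_eq_sum, Polynomial.sum]
    exact tsum_eq_sum fun m hm => by rw [notMem_support_iff.1 hm, zero_mul]
  simp only [tsum_eq_eval] at tendsto_tsum
  rw [tendsto_nhds_unique ((hH x (Ico_subset_Icc_self hx)).mono_left hU) tendsto_tsum]
  exact summable_limit.hasSum

lemma tendsto_bernsteinApproximation_apply {f : ℕ → C(I, ℝ)} {g : C(I, ℝ)}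
    (hf : Tendsto f atTop (𝓝 g)) (x : I) :
    Tendsto (fun N => bernsteinApproximation N (f N) x) atTop (𝓝 (g x)) := by
  have norm_sub_le (N : ℕ) :
      ‖bernsteinApproximation N (f N) x - bernsteinApproximation N g x‖ ≤ ‖f N - g‖ := by
    rw [bernsteinApproximation.apply, bernsteinApproximation.apply, ← Finset.sum_sub_distrib]
    calc _ ≤ ∑ k : Fin (N + 1), bernstein N k x * ‖f N - g‖ := norm_sum_le_of_le _ fun k _ => by
          rw [← smul_sub, norm_smul, Real.norm_of_nonneg bernstein_nonneg]
          exact mul_le_mul_of_nonneg_left ((f N - g).norm_coe_le_norm _) bernstein_nonneg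
      _ = ‖f N - g‖ := by rw [← Finset.sum_mul, bernstein.probability, one_mul]
  have tendsto_g : Tendsto (fun N => bernsteinApproximation N g x) atTop (𝓝 (g x)) :=
    ((ContinuousEvalConst.continuous_eval_const x).tendsto g).comp
      (bernsteinApproximation_uniform g)
  simpa using
    (squeeze_zero_norm norm_sub_le (tendsto_iff_norm_sub_tendsto_zero.1 hf)).add tendsto_g

lemma exists_hasSum_of_coeff_bernstein_nonneg {f : ℕ → C(I, ℝ)} {g : C(I, ℝ)}
    (hf : Tendsto f atTop (𝓝 g))
    (hcoeff : ∀ᶠ N in atTop, ∀ m,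
      0 ≤ (∑ j : Fin (N + 1), f N (bernstein.z j) • bernsteinPolynomial ℝ N j).coeff m) :
    ∃ c : ℕ → ℝ, ∀ x : I, x < 1 → HasSum (fun m => c m * (x : ℝ) ^ m) (g x) := by
  obtain ⟨c, hc⟩ := exists_hasSum_of_tendsto_polynomial_eval (H := IccExtend zero_le_one g) hcoeff
    fun x hx => by
      rw [IccExtend_of_mem zero_le_one g hx]
      refine (tendsto_bernsteinApproximation_apply hf ⟨x, hx⟩).congr fun N => ?_
      simp [bernsteinApproximation.apply, eval_finsetSum, bernstein, mul_comm]
  exact ⟨c, fun x hx => by simpa using hc x ⟨x.2.1, hx⟩⟩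

lemma analyticOnNhd_tsum_mul_pow {d : ℕ → ℝ} {R : ℝ≥0∞}
    (hd : ∀ r : ℝ≥0, r < R → Summable fun m => d m * (r : ℝ) ^ m) :
    AnalyticOnNhd ℝ (fun x : ℝ => ∑' m, d m * x ^ m) (Metric.eball 0 R) := by
  let p := FormalMultilinearSeries.ofScalars ℝ d
  have le_radius : R ≤ p.radius := ENNReal.le_of_forall_nnreal_lt fun r hr =>
    p.le_radius_of_tendsto (l := ‖(0 : ℝ)‖) <|
      (hd r hr).tendsto_atTop_zero.norm.congr fun n => by
        rw [norm_mul, norm_pow, NNReal.norm_eq, FormalMultilinearSeries.ofScalars_norm]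
  have sum_eq : p.sum = fun x : ℝ => ∑' m, d m * x ^ m := by
    funext x
    simp [FormalMultilinearSeries.sum, p, mul_comm]
  intro x hx
  rw [← sum_eq]
  have hx_radius : x ∈ Metric.eball 0 p.radius := Metric.eball_subset_eball le_radius hx
  exact (p.hasFPowerSeriesOnBall (Metric.pos_of_mem_eball hx_radius)).analyticOnNhd x hx_radius

lemma analyticOnNhd_Ioo_of_hasSum {G : ℝ → ℝ} {c : ℕ → ℝ} {R : ℝ}
    (hG : ∀ t ∈ Ico 0 R, HasSum (fun m => c m * t ^ m) (G t)) :
    AnalyticOnNhd ℝ G (Ioo 0 R) := by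
  refine (analyticOnNhd_congr isOpen_Ioo fun t ht => (hG t ⟨ht.1.le, ht.2⟩).tsum_eq).1 ?_
  refine (analyticOnNhd_tsum_mul_pow (R := .ofReal R) fun r hr => ?_).mono fun t ht => ?_
  · exact (hG r ⟨r.2, ENNReal.lt_ofReal_iff_toReal_lt ENNReal.coe_ne_top |>.1 hr⟩).summable
  · rw [Metric.eball_ofReal, Real.ball_eq_Ioo, zero_sub, zero_add]
    exact ⟨by linarith [ht.1, ht.2], ht.2⟩

lemma analyticAt_of_comp_add_exp {F : ℝ → ℝ} {α t : ℝ}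
    (hF : AnalyticAt ℝ (fun s => F (α + Real.exp s)) t) : AnalyticAt ℝ F (α + Real.exp t) := by
  have log_sub : Real.log (α + Real.exp t - α) = t := by rw [add_sub_cancel_left, Real.log_exp]
  have analyticAt_log : AnalyticAt ℝ (fun y => Real.log (y - α)) (α + Real.exp t) :=
    AnalyticAt.log (by fun_prop) (by simpa using Real.exp_pos t)
  refine (AnalyticAt.comp (by rwa [log_sub]) analyticAt_log).congr ?_
  filter_upwards [lt_mem_nhds (lt_add_of_pos_right α (Real.exp_pos t))] with y hy
  simp [Real.exp_log (sub_pos.2 hy)]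

lemma exists_eq_taylor_sum_add_lagrange_remainder {f : ℝ → ℝ} {n : ℕ}
    (hf : ContDiff ℝ (n + 1) f) {x₀ x : ℝ} (hx : x₀ < x) :
    ∃ ξ ∈ Ioo x₀ x,
      f x = ∑ k ∈ Finset.range (n + 1), iteratedDeriv k f x₀ / k ! * (x - x₀) ^ k +
        iteratedDeriv (n + 1) f ξ * (x - x₀) ^ (n + 1) / (n + 1)! := by
  obtain ⟨ξ, hξ, hfξ⟩ := taylor_mean_remainder_lagrange_iteratedDeriv hx.ne hf.contDiffOn
  rw [uIoo_of_lt hx] at hξ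
  refine ⟨ξ, hξ, ?_⟩
  rw [← hfξ, taylor_within_apply, add_sub_left_comm, eq_comm, add_eq_left, sub_eq_zero]
  refine Finset.sum_congr rfl fun k hk => ?_
  have hfk : ContDiff ℝ k f := hf.of_le (by exact_mod_cast (Finset.mem_range.1 hk).le)
  rw [iteratedDerivWithin_eq_iteratedDeriv (uniqueDiffOn_uIcc hx.ne) hfk.contDiffAt left_mem_uIcc,
    smul_eq_mul]
  ring

lemma iteratedDeriv_nonneg_of_forall_lt_eq_zero {f : ℝ → ℝ} {n : ℕ} (hf : ContDiff ℝ n f) {x₀ : ℝ}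
    (hf_nonneg : ∀ x, x₀ ≤ x → 0 ≤ f x) (hf_zero : ∀ k < n, iteratedDeriv k f x₀ = 0) :
    0 ≤ iteratedDeriv n f x₀ := by
  rcases n with _ | n
  · simpa using hf_nonneg x₀ le_rfl
  have hf : ContDiff ℝ (n + 1) f := by exact_mod_cast hf
  by_contra! hneg
  have eventually_neg : ∀ᶠ ξ in 𝓝[>] x₀, iteratedDeriv (n + 1) f ξ < 0 :=
    ((hf.continuous_iteratedDeriv (n + 1) le_rfl).tendsto x₀).eventually_lt_const hneg
      |>.filter_mono nhdsWithin_le_nhds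
  obtain ⟨x, hx, hx_neg⟩ := mem_nhdsGT_iff_exists_Ioo_subset.1 eventually_neg
  obtain ⟨ξ, hξ, hfx⟩ := exists_eq_taylor_sum_add_lagrange_remainder hf hx
  rw [Finset.sum_eq_zero fun k hk => by rw [hf_zero k (Finset.mem_range.1 hk), zero_div, zero_mul],
    zero_add] at hfx
  have hx_pos : 0 < x - x₀ := sub_pos.2 hx
  have remainder_neg : iteratedDeriv (n + 1) f ξ * (x - x₀) ^ (n + 1) / (n + 1)! < 0 :=
    div_neg_of_neg_of_pos (mul_neg_of_neg_of_pos (hx_neg hξ) (by positivity)) (by positivity)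
  exact (hf_nonneg x hx.le).not_gt (hfx ▸ remainder_neg)

lemma absolutelyMonotonicEntire_of_iteratedDeriv_nonneg {F : ℝ → ℝ}
    (hF : AnalyticOnNhd ℝ F univ) (hF_nonneg : ∀ n a, 0 ≤ a → 0 ≤ iteratedDeriv n F a) :
    AbsolutelyMonotonicEntire F := by
  let c (n : ℕ) : ℝ := iteratedDeriv n F 0 / (n !)
  have c_nonneg (n : ℕ) : 0 ≤ c n := div_nonneg (hF_nonneg n 0 le_rfl) (by positivity)
  have summable_of_pos {x : ℝ} (hx : 0 < x) : Summable fun n => c n * x ^ n := by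
    refine summable_of_sum_range_le (c := F x) (fun n => mul_nonneg (c_nonneg n) (by positivity))
      fun n => ?_
    rcases n with _ | n
    · simpa using hF_nonneg 0 x hx.le
    obtain ⟨ξ, hξ, hFx⟩ := exists_eq_taylor_sum_add_lagrange_remainder (n := n)
      (contDiff_iff_contDiffAt.2 fun x => (hF x (mem_univ x)).contDiffAt) hx
    rw [sub_zero] at hFx
    have := hF_nonneg (n + 1) ξ hξ.1.le
    rw [hFx]
    exact le_add_of_nonneg_right (by positivity)
  have summable (x : ℝ) : Summable fun n => c n * x ^ n := by
    refine .of_norm_bounded (summable_of_pos (x := |x| + 1) (by positivity)) fun n => ?_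
    rw [norm_mul, norm_pow, Real.norm_of_nonneg (c_nonneg n), Real.norm_eq_abs]
    gcongr
    · exact c_nonneg n
    · linarith
  have analyticOnNhd_tsum : AnalyticOnNhd ℝ (fun x : ℝ => ∑' n, c n * x ^ n) univ := by
    simpa using analyticOnNhd_tsum_mul_pow (R := ⊤) fun r _ => summable r
  have eq_tsum : F = fun x => ∑' n, c n * x ^ n := by
    refine hF.eq_of_eventuallyEq analyticOnNhd_tsum (z₀ := 0) ?_
    filter_upwards [(hF 0 (mem_univ 0)).hasFPowerSeriesAt.eventually_hasSum] with y hy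
    simpa [c, FormalMultilinearSeries.ofScalars_apply_eq, mul_comm] using hy.tsum_eq.symm
  exact ⟨c, c_nonneg, fun x => congrFun eq_tsum x ▸ (summable x).hasSum⟩

end RealAnalysis

/-- The entrywise action of `F` sends moment sequences of measures on `{-1, u, 1}`, for every
`u ∈ (0, 1)`, to moment sequences of measures on `ℝ`. -/
def PreservesThreePointMoments (F : ℝ → ℝ) : Prop :=
  ∀ u ∈ Ioo (0 : ℝ) 1, ∀ s ∈ momentSet {-1, u, 1}, (fun k => F (s k)) ∈ momentSet univ

namespace PreservesThreePointMoments

open Topology unitInterval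

variable {F : ℝ → ℝ}

lemma comp_two_point_mem_momentSet (hF : PreservesThreePointMoments F) {a b u : ℝ} (ha : 0 ≤ a)
    (hb : 0 ≤ b) (hu : u ∈ Ioo (0 : ℝ) 1) : (fun k => F (a + b * u ^ k)) ∈ momentSet univ := by
  simpa using hF u hu _ (add_mul_pow_add_mul_neg_one_pow_mem_momentSet ha hb le_rfl)

lemma nonneg (hF : PreservesThreePointMoments F) {x : ℝ} (hx : 0 ≤ x) : 0 ≤ F x := by
  simpa using apply_zero_nonneg_of_mem_momentSet
    (hF.comp_two_point_mem_momentSet hx le_rfl (u := 1 / 2) (by norm_num))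

lemma sq_le_mul (hF : PreservesThreePointMoments F) {x y z : ℝ} (hy : 0 < y) (hyz : y < z)
    (hzx : z < x) (hsq : z ^ 2 ≤ x * y) : F z ^ 2 ≤ F x * F y := by
  have hD : 0 < x + y - 2 * z := by nlinarith [sq_pos_of_pos (sub_pos.2 (hyz.trans hzx))]
  have hxz : 0 < x - z := sub_pos.2 hzx
  -- The unique `a`, `b`, `u` with `a + b = x`, `a + b * u = z` and `a + b * u ^ 2 = y`.
  have := sq_apply_one_le_of_mem_momentSet <| hF.comp_two_point_mem_momentSet
    (a := (x * y - z ^ 2) / (x + y - 2 * z)) (b := (x - z) ^ 2 / (x + y - 2 * z))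
    (u := (z - y) / (x - z)) (div_nonneg (by linarith) hD.le) (by positivity)
    ⟨div_pos (sub_pos.2 hyz) hxz, (div_lt_one hxz).2 (by linarith)⟩
  convert this using 3 <;>
    · rw [div_mul_eq_mul_div, ← add_div, eq_div_iff hD.ne']
      field_simp
      ring

lemma monotoneOn_Ioi (hF : PreservesThreePointMoments F) : MonotoneOn F (Ioi 0) :=
  monotoneOn_Ioi_of_sq_le_mul (fun _ hx => hF.nonneg hx.le)
    fun _ _ _ hy hyz hzx hsq => hF.sq_le_mul hy hyz hzx hsq

lemma exists_mem_momentSet_Icc (hF : PreservesThreePointMoments F) {α β b u : ℝ} (hαβ : |α| ≤ β)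
    (hb : 0 < b) (hu : u ∈ Ioo (0 : ℝ) 1) :
    ∃ s ∈ momentSet (Icc (-1) 1), (∀ k, s (2 * k) = F (β + b * u ^ (2 * k))) ∧
      ∀ k, s (2 * k + 1) = F (α + b * u ^ (2 * k + 1)) := by
  obtain ⟨hαβ_neg, hαβ_le⟩ := abs_le.1 hαβ
  have mem_univ := hF u hu _ (add_mul_pow_add_mul_neg_one_pow_mem_momentSet (u := u)
    (a := (β + α) / 2) (c := (β - α) / 2) (by linarith) hb.le (by linarith))
  set s : ℕ → ℝ := fun k => F ((β + α) / 2 + b * u ^ k + (β - α) / 2 * (-1) ^ k)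
  have even_eq (k : ℕ) : s (2 * k) = F (β + b * u ^ (2 * k)) := by
    simp only [s, (even_two_mul k).neg_one_pow]
    ring_nf
  have odd_eq (k : ℕ) : s (2 * k + 1) = F (α + b * u ^ (2 * k + 1)) := by
    simp only [s, (odd_two_mul_add_one k).neg_one_pow]
    ring_nf
  refine ⟨s, mem_momentSet_Icc_of_even_le (C := F (β + b)) mem_univ fun m => ?_, even_eq, odd_eq⟩
  have hu_pos : 0 < u ^ (2 * m) := pow_pos hu.1 _
  have hu_le : u ^ (2 * m) ≤ 1 := pow_le_one₀ hu.1.le hu.2.le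
  have hβ : 0 ≤ β := (abs_nonneg α).trans hαβ
  rw [even_eq]
  refine hF.monotoneOn_Ioi (mem_Ioi.2 (by positivity)) (mem_Ioi.2 (by positivity)) ?_
  gcongr
  exact mul_le_of_le_one_right hb.le hu_le

lemma abs_sub_le (hF : PreservesThreePointMoments F) {α β u : ℝ} (hαβ : |α| ≤ β)
    (hu : u ∈ Ioo (0 : ℝ) 1) :
    |F (α + u) - F (α + u ^ 3)| ≤ F (β + 1) - F (β + u ^ 2) := by
  obtain ⟨s, hs, even_eq, odd_eq⟩ := hF.exists_mem_momentSet_Icc hαβ one_pos hu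
  simpa [even_eq 0, even_eq 1, odd_eq 0, odd_eq 1] using
    abs_odd_sub_le_even_sub_of_mem_momentSet_Icc hs

lemma abs_sub_le_of_abs_sub_eq (hF : PreservesThreePointMoments F) {x y R u : ℝ} (hx : |x| ≤ R)
    (hy : |y| ≤ R) (hu : u ∈ Ioo (0 : ℝ) 1) (hxy : |y - x| = u - u ^ 3) :
    |F y - F x| ≤ F (R + 2) - F (R + 1 + u ^ 2) := by
  wlog hle : x ≤ y generalizing x y
  · rw [abs_sub_comm]
    exact this hy hx (by rwa [abs_sub_comm]) (le_of_not_ge hle)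
  rw [abs_of_nonneg (sub_nonneg.2 hle)] at hxy
  have hu_pos : 0 < u ^ 3 := pow_pos hu.1 3
  have hu_le : u ^ 3 ≤ 1 := pow_le_one₀ hu.1.le hu.2.le
  have hα : |x - u ^ 3| ≤ R + 1 := by
    rw [abs_le] at hx ⊢
    constructor <;> linarith
  have := hF.abs_sub_le hα hu
  rwa [sub_add_cancel, show x - u ^ 3 + u = y by linarith, add_assoc, one_add_one_eq_two] at this

protected lemma continuous (hF : PreservesThreePointMoments F) : Continuous F := by
  refine continuous_iff_continuousAt.2 fun x₀ => Metric.continuousAt_iff.2 fun ε hε => ?_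
  obtain ⟨y, hy, hFy⟩ := exists_gt_continuousAt_of_monotoneOn_Ioi hF.monotoneOn_Ioi (|x₀| + 3)
  have eventually_lt : ∀ᶠ u in 𝓝[<] (1 : ℝ), F y - F (y - 1 + u ^ 2) < ε := by
    have tendsto_zero : Tendsto (fun u : ℝ => F y - F (y - 1 + u ^ 2)) (𝓝 1) (𝓝 0) := by
      have : ContinuousAt (fun u : ℝ => F y - F (y - 1 + u ^ 2)) 1 :=
        continuousAt_const.sub (ContinuousAt.comp (by simpa using hFy) (by fun_prop))
      simpa [ContinuousAt] using this
    exact (tendsto_zero.eventually_lt_const hε).filter_mono nhdsWithin_le_nhds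
  obtain ⟨u₀, ⟨hu₀, hu₀_lt⟩, hu₀_sub⟩ :=
    (mem_nhdsLT_iff_exists_mem_Ico_Ioo_subset one_half_lt_one).1 eventually_lt
  refine ⟨min 1 (u₀ - u₀ ^ 3), lt_min one_pos ?_, fun {x} hx => ?_⟩
  · exact sub_pos.2 (pow_lt_self_of_lt_one₀ (by linarith) hu₀_lt (by norm_num))
  rw [Real.dist_eq] at hx ⊢
  obtain rfl | hne := eq_or_ne x x₀
  · simpa using hε
  obtain ⟨hx_one, hx_lt⟩ := lt_min_iff.1 hx
  obtain ⟨u, hu, hu_eq⟩ := intermediate_value_Ioo' hu₀_lt.le (f := fun u : ℝ => u - u ^ 3)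
    (by fun_prop) (show |x - x₀| ∈ _ from ⟨by simpa [sub_eq_zero] using hne, hx_lt⟩)
  have hx_le : |x| ≤ y - 2 := by linarith [abs_sub_abs_le_abs_sub x x₀, show |x₀| + 3 < y from hy]
  have := hF.abs_sub_le_of_abs_sub_eq (R := y - 2) (by linarith [show |x₀| + 3 < y from hy]) hx_le
    ⟨by linarith [hu.1], hu.2⟩ hu_eq.symm
  rw [sub_add_cancel, show y - 2 + 1 = y - 1 by ring] at this
  exact this.trans_lt (hu₀_sub hu)

lemma exists_hasSum_add_mul_comp_exp (hF : PreservesThreePointMoments F) {α β ε : ℝ}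
    (hαβ : |α| ≤ β) (hε : |ε| ≤ 1) :
    ∃ c : ℕ → ℝ, ∀ t ∈ Ico (0 : ℝ) 1,
      HasSum (fun m => c m * t ^ m) (F (β + Real.exp t) + ε * F (α + Real.exp t)) := by
  have hF_cont := hF.continuous
  let g : C(ℝ × I, ℝ) := ⟨fun p => F (β + Real.exp p.2) + ε * F (α + p.1 * Real.exp p.2),
    by fun_prop⟩
  let u (N : ℕ) : ℝ := Real.exp (-(1 / 2 / N))
  have tendsto_u : Tendsto u atTop (𝓝 1) := by
    have := (tendsto_const_div_atTop_nhds_zero_nat (1 / 2 : ℝ)).neg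
    rw [neg_zero] at this
    simpa only [u, Real.exp_zero, Function.comp_def] using (Real.continuous_exp.tendsto 0).comp this
  obtain ⟨c, hc⟩ := exists_hasSum_of_coeff_bernstein_nonneg
    ((g.curry.continuous.tendsto 1).comp tendsto_u) <| by
      filter_upwards [eventually_gt_atTop 0] with N hN m
      have hN : (0 : ℝ) < N := by exact_mod_cast hN
      have hu : u N ∈ Ioo 0 1 := ⟨Real.exp_pos _, by simpa [u] using hN⟩
      have exp_mul_pow (j : Fin (N + 1)) :
          Real.exp 1 * u N ^ (2 * (N - j : ℕ)) = Real.exp (j / N) := by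
        rw [← Real.exp_nat_mul, ← Real.exp_add, Nat.cast_mul, Nat.cast_sub j.is_le]
        congr 1
        field_simp
        push_cast
        ring
      obtain ⟨s, hs, even_eq, odd_eq⟩ := hF.exists_mem_momentSet_Icc hαβ (Real.exp_pos 1) hu
      have := coeff_sum_smul_bernsteinPolynomial_nonneg
        (fun _ => rieszFunctional_even_add_odd_nonneg hs hε) N m
      simp only [even_eq, odd_eq, pow_succ', mul_left_comm _ (u N), exp_mul_pow] at this
      exact this
  exact ⟨c, fun t ht => by simpa [g] using hc ⟨t, Ico_subset_Icc_self ht⟩ ht.2⟩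

lemma analyticOnNhd_comp_add_exp (hF : PreservesThreePointMoments F) (α : ℝ) :
    AnalyticOnNhd ℝ (fun t => F (α + Real.exp t)) (Ioo 0 1) := by
  obtain ⟨c, hc⟩ := hF.exists_hasSum_add_mul_comp_exp (ε := 1) (le_refl |α|) (by simp)
  obtain ⟨d, hd⟩ := hF.exists_hasSum_add_mul_comp_exp (ε := -1) (le_refl |α|) (by simp)
  refine analyticOnNhd_Ioo_of_hasSum (c := fun m => 1 / 2 * (c m - d m)) fun t ht => ?_
  have hsum := ((hc t ht).sub (hd t ht)).mul_left (1 / 2)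
  have value_eq : 1 / 2 * (F (|α| + Real.exp t) + 1 * F (α + Real.exp t) -
      (F (|α| + Real.exp t) + -1 * F (α + Real.exp t))) = F (α + Real.exp t) := by ring
  simpa only [value_eq, ← sub_mul, ← mul_assoc] using hsum

lemma analyticOnNhd (hF : PreservesThreePointMoments F) : AnalyticOnNhd ℝ F univ := fun x _ => by
  have := hF.analyticOnNhd_comp_add_exp (x - Real.exp (1 / 2)) (1 / 2) (by norm_num)
  simpa using analyticAt_of_comp_add_exp this

lemma iteratedDeriv_nonneg (hF : PreservesThreePointMoments F) (n : ℕ) {a : ℝ} (ha : 0 ≤ a) :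
    0 ≤ iteratedDeriv n F a := by
  have contDiff (m : ℕ) : ContDiff ℝ m F :=
    contDiff_iff_contDiffAt.2 fun x => (hF.analyticOnNhd x (mem_univ x)).contDiffAt
  obtain ⟨p, p_nonneg, p_zero, p_pos⟩ := exists_polynomial_nonneg_eq_zero_on_pos_at
    (S := (Finset.range n).image fun k => (1 / 2 : ℝ) ^ k) (x := (1 / 2) ^ n)
    (by simp)
  let φ (b : ℝ) : ℝ := rieszFunctional (fun k => F (a + b * (1 / 2) ^ k)) p
  have φ_nonneg (b : ℝ) (hb : 0 ≤ b) : 0 ≤ φ b :=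
    rieszFunctional_nonneg (hF.comp_two_point_mem_momentSet ha hb (by norm_num))
      fun x _ => p_nonneg x
  have iteratedDeriv_φ (m : ℕ) :
      iteratedDeriv m φ 0 = p.eval ((1 / 2) ^ m) * iteratedDeriv m F a :=
    iteratedDeriv_rieszFunctional_comp_add_mul_pow (contDiff m) a (1 / 2) p
  have contDiff_φ : ContDiff ℝ n φ := by
    simp only [φ, rieszFunctional_eq_sum_range]
    exact ContDiff.sum fun k _ => contDiff_const.mul ((contDiff n).comp (by fun_prop))
  have := iteratedDeriv_nonneg_of_forall_lt_eq_zero contDiff_φ φ_nonneg fun k hk => by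
    rw [iteratedDeriv_φ, p_zero _ (Finset.mem_image_of_mem _ (Finset.mem_range.2 hk)), zero_mul]
  rw [iteratedDeriv_φ] at this
  exact nonneg_of_mul_nonneg_right this p_pos

lemma absolutelyMonotonicEntire (hF : PreservesThreePointMoments F) :
    AbsolutelyMonotonicEntire F :=
  absolutelyMonotonicEntire_of_iteratedDeriv_nonneg hF.analyticOnNhd
    fun n _ ha => hF.iteratedDeriv_nonneg n ha

end PreservesThreePointMoments

/-- A function maps `M([-1,1])` into `M(ℝ)` entrywise iff it does so on the moment
sequences of measures supported on three points `{-1, u, 1}`, iff it is the restriction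
of an absolutely monotonic entire function. -/
theorem moment_transform_three_point_TFAE (F : ℝ → ℝ) :
    List.TFAE
      [∀ u ∈ Set.Ioo (0 : ℝ) 1, ∀ s ∈ momentSet ({-1, u, 1} : Set ℝ),
          (fun k => F (s k)) ∈ momentSet (Set.univ : Set ℝ),
        ∀ s ∈ momentSet (Set.Icc (-1 : ℝ) 1),
          (fun k => F (s k)) ∈ momentSet (Set.univ : Set ℝ),
        AbsolutelyMonotonicEntire F] := by
  tfae_have 1 → 3 := PreservesThreePointMoments.absolutelyMonotonicEntire
  tfae_have 3 → 2 := fun hF _ hs => momentSet_mono (subset_univ _) (hF.comp_mem_momentSet_Icc hs)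
  tfae_have 2 → 1 := fun hF u hu s hs => by
    have three_point_subset : {-1, u, 1} ⊆ Icc (-1 : ℝ) 1 := by
      rintro x (rfl | rfl | rfl)
      exacts [by norm_num, ⟨by linarith [hu.1], hu.2.le⟩, by norm_num]
    exact hF s (momentSet_mono three_point_subset hs)
  tfae_finish
end
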